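/- Let w ∈ S¹, η ∈ (0,1], and for each k ∈ ℕ let L_k = x_k + ℝe_k be a line in ℝ² with x_k ∈ ℝ² and e_k ∈ C(w,η), and let ρ_k > 0. Set E := ⋂_{n≥1} ⋃_{k≥n} B(L_k,ρ_k). If the sequence of pairs ((x_k,e_k))_{k≥1} is dense in ℝ² × C(w,η), then E is a universal differentiability set; moreover, E contains a (possibly different) sequence of lines (x̃_k + ℝẽ_k)_{k≥1} with ẽ_k ∈ C(w,η) such that ((x̃_k, ẽ_k))_{k≥1} is dense in ℝ² × C(w,η). -/

import Mathlib

/-!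
The differentiability point is found by maximising directional derivatives along lines contained
in `E`, as in the theorem of Preiss on differentiability of Lipschitz functions.

**Lines in `E`.** By Baire's theorem in `ℝ² × C(w, η)`, the set of `(x, e)` for which the whole line
`x + ℝ e` lies in `E` is dense (`dense_lines`). This gives the second claim at once. Let `D` be
this set of pairs.

**Gaining derivative.** Let `h` be `1`-Lipschitz with derivative `m` at `x` in direction `e`, and
suppose that the slopes of `h` at `x` along `e` are at least `m - κ` up to some scale, for both
signs of the increment. If `h` is not approximated near `x` by the linear map `m ⟪·, e⟫` to
within `ε ‖v‖`, then a path made of three lines from `D`, which leaves the line `x + ℝ e` with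
slope of order `ε ^ 2` in order to pass near `x + v`, contains a point `x'` at which the
derivative along the path exceeds `m` by at least a multiple of `ε ^ 4` (`key_step`). A
weak-type maximal inequality (`weak_type`, `one_dim`) lets `x'` be chosen so that the slopes
of `h` at `x'` along `e` remain above `m - loss g`, where `g` is the gain and `loss g → 0` as
`g → 0`.

**Iteration.** A candidate of a stage is a pair in `D`, close to the current point, which does not
decrease the derivative and keeps the slopes in the current direction up to the loss just
described. Each stage takes an almost maximal candidate of the previous one and tilts the function
by a small multiple of the linear form in its direction (`step`); the tilt makes the directions of
later candidates converge. The first tilt, by `w / 4`, keeps the directions well inside the cone.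
Choosing the neighbourhoods inside the open sets `⋃ k ≥ n, B(L_k, ρ_k)` makes the points converge
to a point of `E`, at which each tilted function still has good slopes in the direction of its
stage (`exists_limit`). If some tilted function were not well approximated by a linear map at the
limit, `key_step` would give a candidate gaining more than near-maximality allows; hence the
function is differentiable there (`differentiableAt_limit`).
-/


open MeasureTheory Filter Metric Set Topology RealInnerProductSpace

noncomputable section

/-- The Euclidean plane. -/
abbrev E2 := EuclideanSpace ℝ (Fin 2)

/-- The cone `C(w,α) = {v ∈ S¹ : ⟨v,w⟩ ≥ 1 − α}`. -/
def cone (w : E2) (α : ℝ) : Set E2 :=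
  {v ∈ sphere (0:E2) 1 | 1 - α ≤ ⟪v, w⟫}

/-- The line `x + ℝe`. -/
def line (x e : E2) : Set E2 := {y | ∃ t : ℝ, y = x + t • e}

/-- `E ⊆ ℝ²` is a universal differentiability set if every (real-valued) Lipschitz function
on `ℝ²` has a point of differentiability in `E`. -/
def IsUDS (E : Set E2) : Prop :=
  ∀ f : E2 → ℝ, (∃ K, LipschitzWith K f) → ∃ x ∈ E, DifferentiableAt ℝ f x

/-! ### A maximal inequality and one-dimensional lemmas -/

/-- Weak-type bound for the uncentred maximal operator on an interval: points that belong to an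
interval on which `v` has mean at least `lam` form a set of measure at most `5 / lam` times the
mass of `v`. Proved with the Vitali covering lemma. -/
lemma weak_type (v : ℝ → ENNReal) {a b lam : ℝ} (hlam : 0 < lam) (B : Set ℝ)
    (hB : ∀ τ ∈ B, ∃ c d : ℝ, a ≤ c ∧ c < d ∧ d ≤ b ∧ τ ∈ Icc c d ∧
      ENNReal.ofReal (lam * (d - c)) ≤ ∫⁻ x in Icc c d, v x) :
    volume B ≤ ENNReal.ofReal (5 / lam) * ∫⁻ x in Icc a b, v x := by
  choose! c d hac hcd hdb hmem hint using hB
  have hball : ∀ τ, closedBall ((c τ + d τ) / 2) ((d τ - c τ) / 2) = Icc (c τ) (d τ) := by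
    intro τ
    rw [Real.closedBall_eq_Icc]
    congr 1 <;> ring
  obtain ⟨u, huB, hdisj, hcov⟩ := Vitali.exists_disjoint_subfamily_covering_enlargement_closedBall
    B (fun τ => (c τ + d τ) / 2) (fun τ => (d τ - c τ) / 2) ((b - a) / 2)
    (fun τ hτ => by have := hac τ hτ; have := hdb τ hτ; linarith) 5 (by norm_num)
  have hdisj' : u.PairwiseDisjoint fun τ => Icc (c τ) (d τ) := by
    simpa only [hball] using hdisj
  have hcount : u.Countable := by
    refine hdisj'.countable_of_nonempty_interior fun τ hτ => ?_
    rw [interior_Icc]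
    exact nonempty_Ioo.2 (hcd τ (huB hτ))
  have hsub : B ⊆ ⋃ τ ∈ u, closedBall ((c τ + d τ) / 2) (5 * ((d τ - c τ) / 2)) := by
    intro τ hτ
    obtain ⟨σ, hσ, h⟩ := hcov τ hτ
    refine mem_iUnion₂.2 ⟨σ, hσ, h ?_⟩
    rw [hball]
    exact hmem τ hτ
  calc volume B ≤ ∑' τ : u, volume (closedBall ((c τ + d τ) / 2) (5 * ((d τ - c τ) / 2))) :=
        (measure_mono hsub).trans (measure_biUnion_le _ hcount _)
    _ ≤ ∑' τ : u, ENNReal.ofReal (5 / lam) * ∫⁻ x in Icc (c τ) (d τ), v x := by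
        refine ENNReal.tsum_le_tsum fun τ => ?_
        have h1 := hint τ (huB τ.2)
        rw [Real.volume_closedBall]
        calc ENNReal.ofReal (2 * (5 * ((d τ - c τ) / 2)))
            = ENNReal.ofReal (5 / lam) * ENNReal.ofReal (lam * (d τ - c τ)) := by
              rw [← ENNReal.ofReal_mul (by positivity)]
              congr 1
              field_simp
          _ ≤ _ := by gcongr
    _ = ENNReal.ofReal (5 / lam) * ∫⁻ x in ⋃ τ ∈ u, Icc (c τ) (d τ), v x := by
        rw [ENNReal.tsum_mul_left, lintegral_biUnion hcount (fun _ _ => measurableSet_Icc) hdisj']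
    _ ≤ _ := by
        gcongr
        exact iUnion₂_subset fun τ hτ => Icc_subset_Icc (hac τ (huB hτ)) (hdb τ (huB hτ))

lemma ofReal_integral_le {f : ℝ → ℝ} {μ : Measure ℝ} (hf : Integrable f μ) :
    ENNReal.ofReal (∫ x, f x ∂μ) ≤ ∫⁻ x, ENNReal.ofReal (f x) ∂μ := by
  rw [integral_eq_lintegral_pos_part_sub_lintegral_neg_part hf]
  exact (ENNReal.ofReal_le_ofReal (sub_le_self _ ENNReal.toReal_nonneg)).trans
    ENNReal.ofReal_toReal_le

/-- A Lipschitz function `ψ` which increases by at least `D` on `[a, c]` or on `[c, b]`, but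
decreases by at most `d` on `[a, b]`, where `d` is well below `D`, has outside any null
set a point `τ` with derivative `u > β` such that
every difference quotient of `ψ` at `τ` within `[a, b]` is at least `-80 √u`.

Otherwise, for every `j` the weak-type bound applied to the negative part of `ψ'` bounds the
measure of the set where `ψ'` is of order `4⁻ʲ` by a constant times `2ʲ V`, where `V` is the
integral of that negative part. Summing the contributions `4⁻ʲ 2ʲ V`, the integral of the positive
part of `ψ'` is at most `β (b - a) + V / 2`, which contradicts the increase of `ψ`. -/
lemma one_dim {ψ : ℝ → ℝ} (hψ : LipschitzWith 3 ψ) {a b c β D d : ℝ} (hc : c ∈ Icc a b)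
    {N : Set ℝ} (hN : volume N = 0) (hβ : 0 < β)
    (h1 : D ≤ ψ c - ψ a ∨ D ≤ ψ b - ψ c) (h2 : -d ≤ ψ b - ψ a) (h3 : d + 2 * β * (b - a) < D) :
    ∃ τ ∈ Ioo a b, τ ∉ N ∧ ∃ u > β, HasDerivAt ψ u τ ∧ ∀ t ∈ Icc a b,
      (τ < t → -(80 * √u) * (t - τ) ≤ ψ t - ψ τ) ∧
      (t < τ → -(80 * √u) * (τ - t) ≤ ψ τ - ψ t) := by
  by_contra! hcon
  have hab : a ≤ b := hc.1.trans hc.2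
  set u := deriv ψ with hu
  have hum : Measurable u := measurable_deriv ψ
  have hub : ∀ x, |u x| ≤ 3 := fun x => by
    simpa using norm_deriv_le_of_lipschitz (x₀ := x) hψ
  have hint : ∀ s t : ℝ, IntegrableOn u (Icc s t) := fun s t => by
    refine Measure.integrableOn_of_bounded (M := 3) (by simp) hum.aestronglyMeasurable ?_
    exact Eventually.of_forall fun x => by simpa using hub x
  have hftc : ∀ s t : ℝ, s ≤ t → ∫ x in Icc s t, u x = ψ t - ψ s := fun s t hst => by
    rw [← (hψ.lipschitzOnWith (s := uIcc s t)).absolutelyContinuousOnInterval.integral_deriv_eq_sub,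
      intervalIntegral.integral_of_le hst, integral_Icc_eq_integral_Ioc]
  set P := ∫⁻ x in Icc a b, ENNReal.ofReal (u x) with hP
  set V := ∫⁻ x in Icc a b, ENNReal.ofReal (-u x) with hV
  have hfin : ∀ w : ℝ → ℝ, (∀ x, w x ≤ 3) → ∫⁻ x in Icc a b, ENNReal.ofReal (w x) ≠ ⊤ := by
    intro w hw
    refine (lt_of_le_of_lt (lintegral_mono (g := fun _ => ENNReal.ofReal 3) fun x =>
      ENNReal.ofReal_le_ofReal (hw x)) ?_).ne
    simp [ENNReal.mul_lt_top_iff]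
  have hPt : P ≠ ⊤ := hfin _ fun x => (le_abs_self _).trans (hub x)
  have hVt : V ≠ ⊤ := hfin _ fun x => (neg_le_abs _).trans (hub x)
  have hPV : P.toReal - V.toReal = ψ b - ψ a := by
    rw [← hftc a b hab, integral_eq_lintegral_pos_part_sub_lintegral_neg_part (hint a b)]
  have hDP : D ≤ P.toReal := by
    have key : ∀ s t, a ≤ s → s ≤ t → t ≤ b → ψ t - ψ s ≤ P.toReal := by
      intro s t has hst htb
      rw [← hftc s t hst]
      refine (ENNReal.ofReal_le_iff_le_toReal hPt).1 ((ofReal_integral_le (hint s t)).trans ?_)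
      exact lintegral_mono_set (Icc_subset_Icc has htb)
    rcases h1 with h | h
    · exact h.trans (key a c le_rfl hc.1 hc.2)
    · exact h.trans (key c b hc.1 hc.2 le_rfl)
  -- the level sets of the derivative, at heights comparable with `(1 / 4) ^ j`
  let A : ℕ → Set ℝ := fun j => {x | x ∈ Ioo a b ∧ β < u x ∧ (1 / 4) ^ j < u x ∧ u x ≤ 4 * (1 / 4) ^ j}
  have hAm : ∀ j, MeasurableSet (A j) := fun j =>
    measurableSet_Ioo.inter ((measurableSet_lt measurable_const hum).inter
      ((measurableSet_lt measurable_const hum).inter (measurableSet_le hum measurable_const)))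
  have hA : ∀ j, volume (A j) ≤ ENNReal.ofReal (5 / (80 * (1 / 2) ^ j)) * V := by
    intro j
    rw [← measure_sdiff_null (s := A j) hN]
    refine weak_type _ (by positivity) _ ?_
    rintro τ ⟨⟨hτ, hβu, hl, -⟩, hτN⟩
    have hder : HasDerivAt ψ (u τ) τ :=
      (differentiableAt_of_deriv_ne_zero (hβ.trans hβu).ne').hasDerivAt
    obtain ⟨t, ht, hbad⟩ := hcon τ hτ hτN (u τ) hβu hder
    have hsq : (1 / 2 : ℝ) ^ j ≤ √(u τ) := by
      refine Real.le_sqrt_of_sq_le ?_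
      rw [← pow_mul, mul_comm, pow_mul]
      norm_num at hl ⊢
      exact hl.le
    have key : ∀ s r, s < r → ψ r - ψ s < -(80 * √(u τ)) * (r - s) →
        ENNReal.ofReal (80 * (1 / 2) ^ j * (r - s)) ≤ ∫⁻ x in Icc s r, ENNReal.ofReal (-u x) := by
      intro s r hsr h
      refine le_trans (ENNReal.ofReal_le_ofReal ?_) (ofReal_integral_le (hint s r).neg)
      rw [integral_neg, hftc s r hsr.le]
      have : (1 / 2 : ℝ) ^ j * (r - s) ≤ √(u τ) * (r - s) :=
        mul_le_mul_of_nonneg_right hsq (by linarith)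
      linarith
    by_cases hright : τ < t → -(80 * √(u τ)) * (t - τ) ≤ ψ t - ψ τ
    · obtain ⟨hlt, h⟩ := hbad hright
      exact ⟨t, τ, ht.1, hlt, hτ.2.le, ⟨hlt.le, le_rfl⟩, key _ _ hlt h⟩
    · push Not at hright
      obtain ⟨hlt, h⟩ := hright
      exact ⟨τ, t, hτ.1.le, hlt, ht.2, ⟨le_rfl, hlt.le⟩, key _ _ hlt h⟩
  -- the `A j` exhaust the set where the derivative exceeds `β`, since it is at most `3 ≤ 4`
  have hcover : Icc a b ⊆ ({a, b} ∪ (Icc a b ∩ {x | u x ≤ β})) ∪ ⋃ j, A j := by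
    intro x hx
    by_cases hxa : x = a
    · simp [hxa]
    by_cases hxb : x = b
    · simp [hxb]
    by_cases hxβ : u x ≤ β
    · exact Or.inl (Or.inr ⟨hx, hxβ⟩)
    push Not at hxβ
    right
    have hx0 : 0 < u x := hβ.trans hxβ
    have hx4 : u x / 4 ≤ 1 := by linarith [(le_abs_self _).trans (hub x)]
    obtain ⟨n, hn1, hn2⟩ := exists_nat_pow_near_of_lt_one (by positivity : 0 < u x / 4) hx4
      (by norm_num : (0 : ℝ) < 1 / 4) (by norm_num)
    refine mem_iUnion.2 ⟨n, ⟨lt_of_le_of_ne hx.1 (Ne.symm hxa), lt_of_le_of_ne hx.2 hxb⟩, hxβ, ?_, ?_⟩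
    · rw [pow_succ] at hn1
      linarith
    · linarith
  have hPle : P ≤ ENNReal.ofReal (β * (b - a)) + ENNReal.ofReal (1 / 2) * V := by
    calc P ≤ ∫⁻ x in ({a, b} ∪ (Icc a b ∩ {x | u x ≤ β})) ∪ ⋃ j, A j, ENNReal.ofReal (u x) :=
          lintegral_mono_set hcover
      _ ≤ ((∫⁻ x in {a, b}, ENNReal.ofReal (u x)) +
            ∫⁻ x in Icc a b ∩ {x | u x ≤ β}, ENNReal.ofReal (u x)) +
            ∑' j, ∫⁻ x in A j, ENNReal.ofReal (u x) := by
          refine (lintegral_union_le _ _ _).trans ?_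
          gcongr
          · exact lintegral_union_le _ _ _
          · exact lintegral_iUnion_le _ _
      _ ≤ (0 + ENNReal.ofReal (β * (b - a))) + ∑' j, ENNReal.ofReal ((1 / 4) * (1 / 2) ^ j) * V := by
          gcongr with j
          · rw [setLIntegral_measure_zero _ _ (by
              exact (Set.toFinite {a, b}).measure_zero _)]
          · have hm : MeasurableSet (Icc a b ∩ {x | u x ≤ β}) :=
              measurableSet_Icc.inter (measurableSet_le hum measurable_const)
            calc ∫⁻ x in Icc a b ∩ {x | u x ≤ β}, ENNReal.ofReal (u x)
                ≤ ∫⁻ x in Icc a b ∩ {x | u x ≤ β}, ENNReal.ofReal β :=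
                  setLIntegral_mono' hm fun x hx => ENNReal.ofReal_le_ofReal hx.2
              _ ≤ ∫⁻ x in Icc a b, ENNReal.ofReal β := lintegral_mono_set inter_subset_left
              _ = _ := by
                  rw [setLIntegral_const, Real.volume_Icc, ENNReal.ofReal_mul hβ.le]
          · calc ∫⁻ x in A j, ENNReal.ofReal (u x)
                ≤ ∫⁻ x in A j, ENNReal.ofReal (4 * (1 / 4) ^ j) :=
                  setLIntegral_mono' (hAm j) fun x hx => ENNReal.ofReal_le_ofReal hx.2.2.2
              _ = ENNReal.ofReal (4 * (1 / 4) ^ j) * volume (A j) := setLIntegral_const _ _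
              _ ≤ ENNReal.ofReal (4 * (1 / 4) ^ j) * (ENNReal.ofReal (5 / (80 * (1 / 2) ^ j)) * V) := by
                  gcongr
                  exact hA j
              _ = _ := by
                  rw [← mul_assoc, ← ENNReal.ofReal_mul (by positivity)]
                  congr 2
                  rw [show (1 / 4 : ℝ) ^ j = (1 / 2) ^ j * (1 / 2) ^ j by
                    rw [← mul_pow]; norm_num]
                  have : (1 / 2 : ℝ) ^ j ≠ 0 := by positivity
                  field_simp
                  norm_num
      _ = _ := by
          rw [zero_add, ENNReal.tsum_mul_right]
          congr 2
          rw [← ENNReal.ofReal_tsum_of_nonneg (fun _ => by positivity)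
            (summable_geometric_two.mul_left _), tsum_mul_left, tsum_geometric_two]
          norm_num
  have hfinal : P.toReal ≤ β * (b - a) + 1 / 2 * V.toReal := by
    have h := ENNReal.toReal_mono (by finiteness) hPle
    rw [ENNReal.toReal_add (by finiteness) (by finiteness), ENNReal.toReal_mul,
      ENNReal.toReal_ofReal (mul_nonneg hβ.le (by linarith)),
      ENNReal.toReal_ofReal (by norm_num)] at h
    exact h
  have := (ENNReal.toReal_nonneg : 0 ≤ V.toReal)
  linarith

/-- A version of `one_dim` on a long interval `[-r, r]`, for a function which is large at a
point of `[-R, R]` and has almost nonnegative slopes at `0` beyond the scale `R`. The point obtained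
is at distance of order `R / S`, and the lower bound for the slopes at that point holds on all of
`[-r, r]`, at the cost of an additional error `S`. -/
lemma one_dim_global {ψ : ℝ → ℝ} (hψ : LipschitzWith 3 ψ) {R r S κ δ β A c : ℝ} {N : Set ℝ}
    (hN : volume N = 0) (hβ : 0 < β) (hS : 0 < S) (hS1 : S ≤ 1) (hκ0 : 0 ≤ κ) (hκ : κ ≤ S / 2)
    (hδ0 : 0 ≤ δ) (hδ : δ ≤ R) (hRr : R ≤ r) (hc : |c| ≤ R)
    (hlow : ∀ s, R ≤ s → s ≤ r → -κ * s - δ ≤ ψ s)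
    (hupp : ∀ s, R ≤ s → s ≤ r → ψ (-s) ≤ κ * s + δ)
    (hψR : ψ R ≤ 3 * R) (hψR' : -(3 * R) ≤ ψ (-R)) (hA : A ≤ |ψ c|)
    (hbig : 30 * κ * (R / S) + 3 * δ + 40 * β * (R / S) < A) :
    ∃ τ, |τ| < 10 * (R / S) ∧ τ ∉ N ∧ ∃ u > β, HasDerivAt ψ u τ ∧ ∀ t ∈ Icc (-r) r,
      (τ < t → -(S + 80 * √u) * (t - τ) ≤ ψ t - ψ τ) ∧
      (t < τ → -(S + 80 * √u) * (τ - t) ≤ ψ τ - ψ t) := by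
  -- `one_dim` is applied on `[q, p]`, where `p` minimises `ψ s + S s` on `[R, r]` and `q`
  -- maximises it on `[-r, -R]`; beyond `p` and `q` the slopes are at least `-S` by extremality
  have hcont : Continuous fun s => ψ s + S * s := hψ.continuous.add (by fun_prop)
  obtain ⟨p, hp, hpmin⟩ := isCompact_Icc.exists_isMinOn (nonempty_Icc.2 hRr) hcont.continuousOn
  obtain ⟨q, hq, hqmax⟩ := isCompact_Icc.exists_isMaxOn
    (nonempty_Icc.2 (neg_le_neg hRr)) hcont.continuousOn
  have hpmin' : ∀ s, R ≤ s → s ≤ r → ψ p + S * p ≤ ψ s + S * s := fun s h1 h2 =>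
    isMinOn_iff.1 hpmin s ⟨h1, h2⟩
  have hqmax' : ∀ s, -r ≤ s → s ≤ -R → ψ s + S * s ≤ ψ q + S * q := fun s h1 h2 =>
    isMaxOn_iff.1 hqmax s ⟨h1, h2⟩
  have hp1 := hp.1
  have hp2 := hp.2
  have hq1 := hq.1
  have hq2 := hq.2
  have e1 := hpmin' R le_rfl hRr
  have e2 := hqmax' (-R) (by linarith) le_rfl
  have e3 := hlow p hp1 hp2
  have e4 := hupp (-q) (by linarith) (by linarith)
  rw [neg_neg] at e4
  have hSR : S * R ≤ R := by nlinarith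
  have hpb : p ≤ 10 * (R / S) := by
    rw [← mul_div_assoc, le_div_iff₀ hS]
    nlinarith
  have hqb : -q ≤ 10 * (R / S) := by
    rw [← mul_div_assoc, le_div_iff₀ hS]
    nlinarith
  have hκp : κ * p ≤ 10 * κ * (R / S) := by nlinarith
  have hκq : κ * (-q) ≤ 10 * κ * (R / S) := by nlinarith
  obtain ⟨hc1, hc2⟩ := abs_le.1 hc
  obtain ⟨τ, hτ, hτN, u, hu, hder, hslope⟩ := one_dim hψ (a := q) (b := p) (c := c)
    (D := A - 10 * κ * (R / S) - δ) (d := 20 * κ * (R / S) + 2 * δ)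
    ⟨by linarith, by linarith⟩ hN hβ
    (by
      rcases le_abs'.1 hA with h | h
      · right; linarith
      · left; linarith)
    (by linarith) (by nlinarith)
  refine ⟨τ, abs_lt.2 ⟨by linarith [hτ.1], by linarith [hτ.2]⟩, hτN, u, hu, hder,
    fun t ht => ⟨fun hlt => ?_, fun hlt => ?_⟩⟩
  · have hsq := Real.sqrt_nonneg u
    rcases le_total t p with h | h
    · have := (hslope t ⟨by linarith [hτ.1], h⟩).1 hlt
      nlinarith
    · have h3 := (hslope p ⟨hτ.1.le.trans hτ.2.le, le_rfl⟩).1 hτ.2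
      have h4 := hpmin' t (hp1.trans h) ht.2
      have h5 := hτ.2
      nlinarith [mul_nonneg hsq (sub_nonneg.2 h), mul_nonneg hS.le (sub_nonneg.2 hτ.2.le)]
  · have hsq := Real.sqrt_nonneg u
    rcases le_total q t with h | h
    · have := (hslope t ⟨h, by linarith [hτ.2]⟩).2 hlt
      nlinarith
    · have h3 := (hslope q ⟨le_rfl, hτ.1.le.trans hτ.2.le⟩).2 hτ.1
      have h4 := hqmax' t ht.1 (h.trans hq2)
      nlinarith [mul_nonneg hsq (sub_nonneg.2 h), mul_nonneg hS.le (sub_nonneg.2 hτ.1.le)]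

/-! ### Dense families of lines -/

lemma isClosed_cone (w : E2) (α : ℝ) : IsClosed (cone w α) := by
  have h : IsClosed {v : E2 | 1 - α ≤ ⟪v, w⟫} := isClosed_le continuous_const (by fun_prop)
  exact isClosed_sphere.inter h

/-- Baire category: the lines contained in `E` are dense among the lines with direction in the
cone. For each `n` and `R`, the pairs whose segment of half-length `R` lies in the open set
`⋃ k ≥ n, B(L_k, ρ_k)` form an open set, and it is dense as it contains all `(x_k, e_k)` with
`k ≥ n`. -/
lemma dense_lines {w : E2} {η : ℝ} {x e : ℕ → E2} (he : ∀ k, e k ∈ cone w η) {ρ : ℕ → ℝ}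
    (hρ : ∀ k, 0 < ρ k)
    (hdense : Set.univ ×ˢ cone w η ⊆ closure (Set.range fun k => (x k, e k)))
    {E : Set E2}
    (hE : E = ⋂ n : ℕ, ⋃ k, ⋃ _ : n ≤ k, Metric.thickening (ρ k) (line (x k) (e k))) :
    Dense {p : E2 × cone w η | line p.1 p.2 ⊆ E} := by
  have : CompleteSpace (cone w η) := (isClosed_cone w η).completeSpace_coe
  set U : ℕ → Set E2 := fun n => ⋃ k, ⋃ _ : n ≤ k, Metric.thickening (ρ k) (line (x k) (e k))
    with hU
  have hUo : ∀ n, IsOpen (U n) := fun n => isOpen_iUnion fun k => isOpen_iUnion fun _ =>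
    isOpen_thickening
  let q : ℕ → E2 × cone w η := fun k => (x k, ⟨e k, he k⟩)
  have hq : DenseRange q := by
    rintro ⟨y, v⟩
    have h := hdense (show (y, (v : E2)) ∈ _ from ⟨mem_univ _, v.2⟩)
    rw [mem_closure_iff_nhds_basis nhds_basis_ball] at h ⊢
    intro ε hε
    obtain ⟨_, ⟨k, rfl⟩, hk⟩ := h ε hε
    exact ⟨q k, ⟨k, rfl⟩, hk⟩
  -- removing finitely many points does not destroy density, as the space has no isolated points
  have htail : ∀ n, Dense (q '' {k | n ≤ k}) := by
    intro n
    have hne : ∀ p : E2 × cone w η, (𝓝[≠] p).NeBot := by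
      intro p
      refine Tendsto.neBot (f := fun z : E2 => (z, p.2)) (x := 𝓝[≠] p.1) ?_
      refine tendsto_nhdsWithin_of_tendsto_nhds_of_eventually_within _ ?_ ?_
      · refine (Continuous.tendsto' (by fun_prop) _ _ rfl).mono_left nhdsWithin_le_nhds
      · filter_upwards [self_mem_nhdsWithin] with z hz h
        exact hz (congrArg Prod.fst h)
    have h1 : Dense (range q \ q '' {k | k < n}) :=
      Dense.sdiff_finite hq ((finite_lt_nat n).image q)
    refine h1.mono ?_
    rintro _ ⟨⟨k, rfl⟩, hk⟩
    refine ⟨k, ?_, rfl⟩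
    by_contra hlt
    exact hk ⟨k, by simpa using hlt, rfl⟩
  let O : ℕ × ℕ → Set (E2 × cone w η) := fun m =>
    {p | ∀ t ∈ Icc (-(m.2 : ℝ)) m.2, p.1 + t • (p.2 : E2) ∈ U m.1}
  have hOo : ∀ m, IsOpen (O m) := by
    intro m
    rw [isOpen_iff_eventually]
    intro p hp
    refine isCompact_Icc.eventually_forall_of_forall_eventually fun t ht => ?_
    have hc : Continuous fun z : (E2 × cone w η) × ℝ => z.1.1 + z.2 • (z.1.2 : E2) := by fun_prop
    exact hc.continuousAt.eventually ((hUo m.1).mem_nhds (hp t ht))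
  have hOd : ∀ m, Dense (O m) := by
    intro m
    refine (htail m.1).mono ?_
    rintro _ ⟨k, hk, rfl⟩ t -
    refine mem_iUnion₂.2 ⟨k, hk, self_subset_thickening (hρ k) _ ⟨t, rfl⟩⟩
  refine (dense_iInter_of_isOpen hOo hOd).mono ?_
  rintro p hp _ ⟨t, rfl⟩
  rw [hE]
  refine mem_iInter.2 fun n => ?_
  obtain ⟨R, hR⟩ := exists_nat_ge |t|
  exact mem_iInter.1 hp (n, R) t ⟨(abs_le.1 hR).1, (abs_le.1 hR).2⟩

/-- A countable dense family of lines can be extracted from a dense set of lines. -/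
lemma second_part {w : E2} {η : ℝ} {E : Set E2} (hne : (cone w η).Nonempty)
    (hd : Dense {p : E2 × cone w η | line p.1 p.2 ⊆ E}) :
    ∃ x' e' : ℕ → E2, (∀ k, e' k ∈ cone w η) ∧ (∀ k, line (x' k) (e' k) ⊆ E) ∧
        Set.univ ×ˢ cone w η ⊆ closure (Set.range fun k => (x' k, e' k)) := by
  obtain ⟨v0, hv0⟩ := hne
  have : Nonempty (cone w η) := ⟨⟨v0, hv0⟩⟩
  have : Nonempty {p : E2 × cone w η | line p.1 p.2 ⊆ E} := hd.nonempty.to_subtype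
  obtain ⟨u, hu⟩ := TopologicalSpace.exists_dense_seq {p : E2 × cone w η | line p.1 p.2 ⊆ E}
  refine ⟨fun k => (u k).1.1, fun k => (u k).1.2, fun k => (u k).1.2.2, fun k => (u k).2, ?_⟩
  rintro ⟨y, v⟩ ⟨-, hv⟩
  have h2 : DenseRange fun k => (u k : E2 × cone w η) :=
    hd.denseRange_val.comp hu continuous_subtype_val
  have h := h2 (y, ⟨v, hv⟩)
  rw [mem_closure_iff_nhds_basis nhds_basis_ball] at h ⊢
  intro ε hε
  obtain ⟨_, ⟨k, rfl⟩, hk⟩ := h ε hε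
  exact ⟨_, ⟨k, rfl⟩, hk⟩

/-! ### Frames, and lines as graphs -/

/-- An orthonormal frame of the plane, together with the resulting expansion of every vector. -/
structure Frame (e n : E2) : Prop where
  norm_e : ‖e‖ = 1
  norm_n : ‖n‖ = 1
  orth : ⟪e, n⟫ = 0
  expand : ∀ v : E2, v = ⟪v, e⟫ • e + ⟪v, n⟫ • n

/-- The unit vector of slope `a` with respect to the frame `(e, n)`. -/
def dir (e n : E2) (a : ℝ) : E2 := (√(1 + a ^ 2))⁻¹ • (e + a • n)

lemma exists_frame {e : E2} (he : ‖e‖ = 1) : ∃ n, Frame e n := by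
  have h1 : e 0 ^ 2 + e 1 ^ 2 = 1 := by
    have := EuclideanSpace.real_norm_sq_eq e
    rw [he, Fin.sum_univ_two] at this
    linarith
  refine ⟨!₂[-e 1, e 0], he, ?_, ?_, fun v => ?_⟩
  · rw [EuclideanSpace.norm_eq, Fin.sum_univ_two]
    simp
    linarith
  · simp [PiLp.inner_apply, Fin.sum_univ_two]
    ring
  · ext i
    fin_cases i
    · simp [PiLp.inner_apply, Fin.sum_univ_two]
      linear_combination (- v 0) * h1
    · simp [PiLp.inner_apply, Fin.sum_univ_two]
      linear_combination (- v 1) * h1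

lemma Frame.neg {e n : E2} (h : Frame e n) : Frame e (-n) := by
  refine ⟨h.norm_e, by simpa using h.norm_n, by simpa using h.orth, fun v => ?_⟩
  simpa using h.expand v

lemma Frame.inner_ee {e n : E2} (h : Frame e n) : ⟪e, e⟫ = 1 := by
  rw [real_inner_self_eq_norm_sq, h.norm_e]; norm_num

lemma Frame.inner_nn {e n : E2} (h : Frame e n) : ⟪n, n⟫ = 1 := by
  rw [real_inner_self_eq_norm_sq, h.norm_n]; norm_num

lemma Frame.inner_ne {e n : E2} (h : Frame e n) : ⟪n, e⟫ = 0 := by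
  rw [real_inner_comm]; exact h.orth

lemma sqrt_one_add_sq_pos (a : ℝ) : 0 < √(1 + a ^ 2) := Real.sqrt_pos.2 (by positivity)

lemma Frame.norm_sq {e n : E2} (h : Frame e n) (v : E2) : ‖v‖ ^ 2 = ⟪v, e⟫ ^ 2 + ⟪v, n⟫ ^ 2 := by
  conv_lhs => rw [← real_inner_self_eq_norm_sq, h.expand v]
  simp only [inner_add_left, inner_add_right, inner_smul_left, inner_smul_right, h.inner_ee,
    h.inner_nn, h.inner_ne, h.orth, conj_trivial]
  ring

lemma Frame.norm_dir {e n : E2} (h : Frame e n) (a : ℝ) : ‖dir e n a‖ = 1 := by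
  have h1 : ‖dir e n a‖ ^ 2 = 1 := by
    rw [h.norm_sq, dir]
    simp only [inner_add_left, inner_smul_left, h.inner_ee,
      h.inner_nn, h.inner_ne, h.orth, conj_trivial]
    have := sqrt_one_add_sq_pos a
    field_simp
    rw [Real.sq_sqrt (by positivity)]
    ring
  exact (sq_eq_sq₀ (norm_nonneg _) zero_le_one).1 (by simpa using h1)

/-- A set of pointed directed lines is closed under sliding the base point along the line. -/
def Slides (D : Set (E2 × E2)) : Prop := ∀ z e, ∀ t : ℝ, (z, e) ∈ D → (z + t • e, e) ∈ D

/-- Near any line which is the graph of `s ↦ a s + b` over the direction `e` in coordinates centred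
at `x`, with direction in `C`, there is a line all of whose points, with its direction, are in the
dense set `D`. -/
lemma exists_graph {D : Set (E2 × E2)} {C : Set E2} (hs : Slides D) (hC : D ⊆ univ ×ˢ C)
    (hC1 : ∀ v ∈ C, ‖v‖ = 1)
    (hD : univ ×ˢ C ⊆ closure D) {e n : E2} (hf : Frame e n) (x : E2) {a b δ : ℝ}
    (ha : dir e n a ∈ C) (hδ : 0 < δ) :
    ∃ a' b' : ℝ, |a' - a| < δ ∧ |b' - b| < δ ∧
      ∀ s : ℝ, (x + s • e + (a' * s + b') • n, dir e n a') ∈ D := by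
  have hcl := hD (show (x + b • n, dir e n a) ∈ _ from ⟨mem_univ _, ha⟩)
  let A : E2 × E2 → ℝ := fun p => ⟪p.2, n⟫ / ⟪p.2, e⟫
  let B : E2 × E2 → ℝ := fun p => ⟪p.1 - x, n⟫ - A p * ⟪p.1 - x, e⟫
  have hsp := sqrt_one_add_sq_pos a
  have hie : ⟪dir e n a, e⟫ = (√(1 + a ^ 2))⁻¹ := by
    simp [dir, inner_add_left, inner_smul_left, hf.norm_e, hf.inner_ne]
  have hin : ⟪dir e n a, n⟫ = (√(1 + a ^ 2))⁻¹ * a := by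
    simp [dir, inner_add_left, inner_smul_left, hf.norm_n, hf.orth]
  have hA0 : A (x + b • n, dir e n a) = a := by
    simp only [A, hie, hin]
    field_simp
  have hB0 : B (x + b • n, dir e n a) = b := by
    simp only [B, hA0]
    simp [inner_smul_left, hf.norm_n, hf.inner_ne]
  have hAc : ContinuousAt A (x + b • n, dir e n a) := by
    refine ContinuousAt.div (by fun_prop) (by fun_prop) ?_
    simp only [hie]
    positivity
  have hBc : ContinuousAt B (x + b • n, dir e n a) := by
    refine ContinuousAt.sub (by fun_prop) (hAc.mul (by fun_prop))
  have hpos : ∀ᶠ p : E2 × E2 in 𝓝 (x + b • n, dir e n a), 0 < ⟪p.2, e⟫ := by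
    have hc : ContinuousAt (fun p : E2 × E2 => ⟪p.2, e⟫) (x + b • n, dir e n a) := by fun_prop
    refine hc.eventually (lt_mem_nhds ?_)
    simp only [hie]
    positivity
  have h1 := hAc.eventually (Metric.ball_mem_nhds _ hδ)
  have h2 := hBc.eventually (Metric.ball_mem_nhds _ hδ)
  rw [hA0] at h1
  rw [hB0] at h2
  obtain ⟨⟨z, v⟩, hzD, ⟨hA, hB⟩, hp⟩ := ((mem_closure_iff_frequently.1 hcl).and_eventually
    ((h1.and h2).and hpos)).exists
  refine ⟨A (z, v), B (z, v), by simpa [Real.dist_eq] using hA, by simpa [Real.dist_eq] using hB,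
    fun s => ?_⟩
  have hv1 : ⟪v, e⟫ ^ 2 + ⟪v, n⟫ ^ 2 = 1 := by
    rw [← hf.norm_sq, hC1 v (hC hzD).2]; norm_num
  change 0 < ⟪v, e⟫ at hp
  have hAd : A (z, v) = ⟪v, n⟫ / ⟪v, e⟫ := rfl
  have hBd : B (z, v) = ⟪z - x, n⟫ - A (z, v) * ⟪z - x, e⟫ := rfl
  have hsq : √(1 + A (z, v) ^ 2) = ⟪v, e⟫⁻¹ := by
    rw [Real.sqrt_eq_iff_eq_sq (by positivity) (by positivity), hAd]
    field_simp
    exact hv1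
  have hdir : dir e n (A (z, v)) = v := by
    rw [dir, hsq, inv_inv, hAd, smul_add, smul_smul]
    conv_rhs => rw [hf.expand v]
    congr 2
    field_simp
  rw [hdir]
  have := hs z v ((s - ⟪z - x, e⟫) / ⟪v, e⟫) hzD
  convert this using 2
  have hz : z = ⟪z - x, e⟫ • e + ⟪z - x, n⟫ • n + x := by
    rw [← hf.expand (z - x)]; abel
  have hv := hf.expand v
  rw [hBd, hAd]
  generalize ⟪z - x, e⟫ = p at hz ⊢
  generalize ⟪z - x, n⟫ = q at hz ⊢
  generalize ⟪v, e⟫ = c at hv hp ⊢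
  generalize ⟪v, n⟫ = d at hv ⊢
  have h5 : (s - p) / c * c = s - p := by field_simp
  have h6 : d / c * s + (q - d / c * p) = q + (s - p) / c * d := by ring
  rw [hz, hv, h6, smul_add, smul_smul, smul_smul, h5]
  module

/-! ### Slopes and piecewise affine paths -/

/-- The loss allowed in the slope condition, as a function of the gain of derivative. -/
def loss (g : ℝ) : ℝ := 120 * √g + 140 * √√g

/-- At scales up to `r`, the function `h` has all its difference quotients at `x` in
direction `e`, forward and backward, at least `c`. -/
def Slope (h : E2 → ℝ) (x e : E2) (r c : ℝ) : Prop :=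
  ∀ t, 0 < t → t ≤ r → c * t ≤ h (x + t • e) - h x ∧ c * t ≤ h x - h (x - t • e)

/-- The piecewise affine function `max y₀ (min y₁ y₂)`, where `y_i s = a_i s + b_i`: a floor `y₀`
with a roof formed by `y₁` and `y₂`. -/
def roof (a₀ b₀ a₁ b₁ a₂ b₂ s : ℝ) : ℝ := max (a₀ * s + b₀) (min (a₁ * s + b₁) (a₂ * s + b₂))

lemma roof_close (a₀ b₀ a₁ b₁ a₂ b₂ c₀ d₀ c₁ d₁ c₂ d₂ s t δ : ℝ)
    (h0 : |a₀ * s + b₀ - (c₀ * t + d₀)| ≤ δ) (h1 : |a₁ * s + b₁ - (c₁ * t + d₁)| ≤ δ)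
    (h2 : |a₂ * s + b₂ - (c₂ * t + d₂)| ≤ δ) :
    |roof a₀ b₀ a₁ b₁ a₂ b₂ s - roof c₀ d₀ c₁ d₁ c₂ d₂ t| ≤ δ :=
  (abs_max_sub_max_le_max _ _ _ _).trans (max_le h0
    ((abs_min_sub_min_le_max _ _ _ _).trans (max_le h1 h2)))

lemma roof_lip {a₀ b₀ a₁ b₁ a₂ b₂ L : ℝ} (h0 : |a₀| ≤ L) (h1 : |a₁| ≤ L) (h2 : |a₂| ≤ L)
    (s t : ℝ) : |roof a₀ b₀ a₁ b₁ a₂ b₂ s - roof a₀ b₀ a₁ b₁ a₂ b₂ t| ≤ L * |s - t| := by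
  have key : ∀ a b : ℝ, |a| ≤ L → |a * s + b - (a * t + b)| ≤ L * |s - t| := by
    intro a b ha
    rw [show a * s + b - (a * t + b) = a * (s - t) by ring, abs_mul]
    gcongr
  exact roof_close _ _ _ _ _ _ _ _ _ _ _ _ _ _ _ (key _ _ h0) (key _ _ h1) (key _ _ h2)

/-- Away from the crossings, the roof coincides locally with one of the three affine functions. -/
lemma roof_local {a₀ b₀ a₁ b₁ a₂ b₂ s : ℝ} (h0 : a₀ * s + b₀ ≠ a₁ * s + b₁)
    (h1 : a₀ * s + b₀ ≠ a₂ * s + b₂) (h2 : a₁ * s + b₁ ≠ a₂ * s + b₂) :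
    ∃ p ∈ ({(a₀, b₀), (a₁, b₁), (a₂, b₂)} : Set (ℝ × ℝ)),
      roof a₀ b₀ a₁ b₁ a₂ b₂ =ᶠ[𝓝 s] fun t => p.1 * t + p.2 := by
  have ev : ∀ a b c d : ℝ, a * s + b < c * s + d → ∀ᶠ t in 𝓝 s, a * t + b < c * t + d := by
    intro a b c d h
    have h1 : ContinuousAt (fun t => a * t + b) s := by fun_prop
    have h2 : ContinuousAt (fun t => c * t + d) s := by fun_prop
    exact h1.eventually_lt h2 h
  rcases lt_or_gt_of_ne h0 with h0 | h0 <;> rcases lt_or_gt_of_ne h1 with h1 | h1 <;>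
    rcases lt_or_gt_of_ne h2 with h2 | h2
  · refine ⟨(a₁, b₁), by simp, ?_⟩
    filter_upwards [ev _ _ _ _ h0, ev _ _ _ _ h2] with t k0 k2
    rw [roof, min_eq_left k2.le, max_eq_right k0.le]
  · refine ⟨(a₂, b₂), by simp, ?_⟩
    filter_upwards [ev _ _ _ _ h1, ev _ _ _ _ h2] with t k0 k2
    rw [roof, min_eq_right k2.le, max_eq_right k0.le]
  all_goals
    refine ⟨(a₀, b₀), by simp, ?_⟩
    first
    | filter_upwards [ev _ _ _ _ h0] with t k0
      rw [roof, max_eq_left ((min_le_left _ _).trans k0.le)]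
    | filter_upwards [ev _ _ _ _ h1] with t k0
      rw [roof, max_eq_left ((min_le_right _ _).trans k0.le)]

lemma crossing_null {a₀ b₀ a₁ b₁ a₂ b₂ : ℝ} (h0 : a₀ ≠ a₁) (h1 : a₀ ≠ a₂) (h2 : a₁ ≠ a₂) :
    volume {s : ℝ | a₀ * s + b₀ = a₁ * s + b₁ ∨ a₀ * s + b₀ = a₂ * s + b₂ ∨
      a₁ * s + b₁ = a₂ * s + b₂} = 0 := by
  refine measure_mono_null ?_ ((Set.toFinite
    {(b₁ - b₀) / (a₀ - a₁), (b₂ - b₀) / (a₀ - a₂), (b₂ - b₁) / (a₁ - a₂)}).measure_zero _)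
  have key : ∀ {a b c d s : ℝ}, a ≠ c → a * s + b = c * s + d → s = (d - b) / (a - c) := by
    intro a b c d s hac h
    rw [eq_div_iff (sub_ne_zero.2 hac)]
    linarith
  rintro s (h | h | h)
  · exact Or.inl (key h0 h)
  · exact Or.inr (Or.inl (key h1 h))
  · exact Or.inr (Or.inr (key h2 h))

lemma lip_sub {h : E2 → ℝ} (hh : LipschitzWith 1 h) (y z : E2) : |h y - h z| ≤ ‖y - z‖ := by
  simpa [Real.dist_eq, dist_eq_norm] using hh.dist_le_mul y z

/-- At a point `τ` where the path `s ↦ x + s e + Y s n` follows a line of slope `a`, a derivative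
`u` of the increment of `h` along the path, with the linear part `m s` removed, yields a
directional derivative exceeding `m` by at least `u / 2`: normalising the direction costs only
`a² / 2`, which is negligible compared to `u`. -/
lemma deriv_candidate {h : E2 → ℝ} (hh : LipschitzWith 1 h) {e n : E2} (hf : Frame e n)
    {x : E2} {m u τ a b μ : ℝ} {Y : ℝ → ℝ} (hY : Y =ᶠ[𝓝 τ] fun t => a * t + b)
    (ha : |a| ≤ 2 * μ) (hμ : 4 * μ ^ 2 ≤ u)
    (hd : HasDerivAt (fun s => h (x + s • e + Y s • n) - m * s - h x) u τ) :
    ∃ m', HasDerivAt (fun t : ℝ => h (x + τ • e + Y τ • n + t • dir e n a)) m' 0 ∧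
      u ≤ 2 * (m' - m) := by
  set q := √(1 + a ^ 2) with hq
  have hq0 : 0 < q := sqrt_one_add_sq_pos a
  have hG : HasDerivAt (fun s => h (x + s • e + (a * s + b) • n)) (m + u) τ := by
    have h1 : HasDerivAt (fun s => h (x + s • e + Y s • n)) (u + m) τ := by
      have h2 := (hd.add ((hasDerivAt_id τ).const_mul m)).add_const (h x)
      rw [mul_one] at h2
      exact h2.congr_of_eventuallyEq (Eventually.of_forall fun s => by
        simp only [Pi.add_apply, id]; ring)
    rw [add_comm]
    refine h1.congr_of_eventuallyEq ?_
    filter_upwards [hY] with s hs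
    rw [hs]
  have hY0 : Y τ = a * τ + b := hY.eq_of_nhds
  have hcomp : (fun t : ℝ => h (x + τ • e + Y τ • n + t • dir e n a)) =
      (fun s => h (x + s • e + (a * s + b) • n)) ∘ fun t => τ + q⁻¹ * t := by
    ext t
    simp only [Function.comp, hY0, dir]
    congr 1
    module
  have hder : HasDerivAt (fun t : ℝ => h (x + τ • e + Y τ • n + t • dir e n a))
      ((m + u) * q⁻¹) 0 := by
    rw [hcomp]
    refine HasDerivAt.comp (h₂ := fun s => h (x + s • e + (a * s + b) • n))
      (h := fun t => τ + q⁻¹ * t) 0 (by simpa using hG) ?_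
    simpa using ((hasDerivAt_id (0 : ℝ)).const_mul q⁻¹).const_add τ
  refine ⟨_, hder, ?_⟩
  have hlip : LipschitzWith 1 (fun t : ℝ => h (x + τ • e + Y τ • n + t • dir e n a)) := by
    refine LipschitzWith.of_dist_le_mul fun s t => ?_
    rw [Real.dist_eq, Real.dist_eq]
    refine (lip_sub hh _ _).trans ?_
    rw [show x + τ • e + Y τ • n + s • dir e n a - (x + τ • e + Y τ • n + t • dir e n a) =
      (s - t) • dir e n a by module, norm_smul, hf.norm_dir]
    simp
  have hm1 : |(m + u) * q⁻¹| ≤ 1 := by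
    have := norm_deriv_le_of_lipschitz (x₀ := 0) hlip
    rw [hder.deriv] at this
    simpa using this
  set m' := (m + u) * q⁻¹ with hm'
  have hmu : m + u = m' * q := by rw [hm']; field_simp
  have ha2 : a ^ 2 ≤ 4 * μ ^ 2 := by
    rw [← sq_abs a]; nlinarith [abs_nonneg a]
  have hq1 : 1 ≤ q := Real.one_le_sqrt.2 (by nlinarith [sq_nonneg a])
  have hq2 : q ≤ 1 + a ^ 2 / 2 := by
    rw [hq, Real.sqrt_le_left (by positivity)]
    nlinarith [sq_nonneg (a ^ 2)]
  have := (abs_le.1 hm1).2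
  nlinarith

/-- Slopes of `h` at a point of the path `s ↦ x + s e + Y s n`: at scales up to `r / 2` they are
controlled by the slopes along the path, and at larger scales by those at `x`. -/
lemma slope_candidate {h : E2 → ℝ} (hh : LipschitzWith 1 h) {e n : E2} (hf : Frame e n)
    {x : E2} {m τ κ r S lam μ c : ℝ} {Y : ℝ → ℝ} (hY : ∀ s t, |Y s - Y t| ≤ μ * |s - t|)
    (hsl : Slope h x e r (m - κ)) (hτ : |τ| ≤ r / 2)
    (hx : ‖x + τ • e + Y τ • n - x‖ ≤ S * r / 4) (hr : 0 < r)
    (hψ : ∀ t ∈ Icc (-r) r,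
      (τ < t → -lam * (t - τ) ≤ (h (x + t • e + Y t • n) - m * t - h x) -
        (h (x + τ • e + Y τ • n) - m * τ - h x)) ∧
      (t < τ → -lam * (τ - t) ≤ (h (x + τ • e + Y τ • n) - m * τ - h x) -
        (h (x + t • e + Y t • n) - m * t - h x)))
    (hc1 : c ≤ m - lam - μ) (hc2 : c ≤ m - κ - S) :
    Slope h (x + τ • e + Y τ • n) e r c := by
  intro t ht htr
  obtain ⟨hτ1, hτ2⟩ := abs_le.1 hτ
  set x' := x + τ • e + Y τ • n with hx'
  rcases le_total t (r / 2) with h2 | h2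
  · have key : ∀ s, |h (x' + s • e) - h (x + (τ + s) • e + Y (τ + s) • n)| ≤ μ * |s| := by
      intro s
      refine (lip_sub hh _ _).trans ?_
      rw [hx', show x + τ • e + Y τ • n + s • e - (x + (τ + s) • e + Y (τ + s) • n) =
        (Y τ - Y (τ + s)) • n by module, norm_smul, hf.norm_n, mul_one, Real.norm_eq_abs]
      refine (hY _ _).trans_eq ?_
      rw [show τ - (τ + s) = -s by ring, abs_neg]
    constructor
    · have h3 := (abs_le.1 (key t)).1
      have h4 := (hψ (τ + t) ⟨by linarith, by linarith⟩).1 (by linarith)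
      rw [abs_of_pos ht] at h3
      nlinarith
    · have h3 := (abs_le.1 (key (-t))).2
      have h4 := (hψ (τ + -t) ⟨by linarith, by linarith⟩).2 (by linarith)
      rw [abs_neg, abs_of_pos ht, neg_smul, ← sub_eq_add_neg] at h3
      nlinarith
  · have h3 := abs_le.1 (lip_sub hh x' x)
    have key : ∀ s : ℝ, |h (x' + s • e) - h (x + s • e)| ≤ ‖x' - x‖ := by
      intro s
      refine (lip_sub hh _ _).trans_eq ?_
      congr 1
      module
    have h4 := abs_le.1 (key t)
    have h5 := abs_le.1 (key (-t))
    rw [neg_smul, ← sub_eq_add_neg, ← sub_eq_add_neg] at h5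
    obtain ⟨h6, h7⟩ := hsl t ht htr
    have hS : 0 ≤ S := by
      have := (norm_nonneg _).trans hx
      by_contra hneg
      nlinarith
    constructor <;> nlinarith

/-! ### Gaining derivative at points of bad approximation -/

set_option maxHeartbeats 1600000 in
/-- If the linear map with derivative `m` along `e` and zero along `n` fails to approximate `h` at
`x` to within `ε ‖v‖`, while the slopes of `h` at `x` along `e` are at least `m - κ`, then some
`(x', e') ∈ D` has a directional derivative larger than `m` by at least a multiple of `ε ^ 4`, with
slopes along the *old* direction `e` lowered only by the loss function of the gain.

Consider the path which follows the line `x + ℝ e`, makes a detour through `x + v` with slope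
`± μ`, where `μ` is of order `ε ^ 2`, and returns to the line. After a perturbation it consists of
three lines from `D`. As `h` grows along it almost at rate `m` overall, but deviates by `ε ‖v‖` at
`x + v`, the one-dimensional lemma gives a point of the path with a large derivative. -/
lemma key_step {h : E2 → ℝ} (hh : LipschitzWith 1 h) {D : Set (E2 × E2)} {C : Set E2}
    (hs : Slides D) (hC : D ⊆ univ ×ˢ C) (hC1 : ∀ v ∈ C, ‖v‖ = 1)
    (hD : univ ×ˢ C ⊆ closure D) {e n : E2} (hf : Frame e n) {x : E2} {m ε κ r s : ℝ}
    (hm : |m| ≤ 1) (hε : 0 < ε) (hε1 : ε ≤ 1)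
    (hcone : ∀ a, |a| ≤ ε ^ 2 / 4096 → dir e n a ∈ C) (hκ0 : 0 ≤ κ)
    (hκ : κ ≤ ε ^ 4 / 2 ^ 20) (hr : 0 < r) (hsl : Slope h x e r (m - κ)) {v : E2}
    (hv1s : 8192 * ‖v‖ / ε ^ 3 < s / 30) (hv1r : 8192 * ‖v‖ / ε ^ 3 ≤ ε * r / 120)
    (hvn : 0 ≤ ⟪v, n⟫) (hbad : ε * ‖v‖ < |h (x + v) - h x - m * ⟪v, e⟫|) :
    ∃ x' e' m', (x', e') ∈ D ∧ ‖x' - x‖ < s ∧ HasDerivAt (fun t : ℝ => h (x' + t • e')) m' 0 ∧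
      ε ^ 4 / 2 ^ 22 < m' - m ∧ Slope h x' e r (m - loss (m' - m)) := by
  have hv0 : 0 < ‖v‖ := by
    rcases (norm_nonneg v).eq_or_lt with h0 | h0
    · rw [norm_eq_zero.1 h0.symm] at hbad
      simp at hbad
    · exact h0
  set ρ := ‖v‖ with hρ
  set v₁ := ⟪v, e⟫ with hv₁
  set v₂ := ⟪v, n⟫ with hv₂
  have hv₁ρ : |v₁| ≤ ρ := by
    have := abs_real_inner_le_norm v e
    rwa [hf.norm_e, mul_one] at this
  have hv₂ρ : v₂ ≤ ρ := by
    have := real_inner_le_norm v n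
    rwa [hf.norm_n, mul_one] at this
  -- `μ` is the slope of the detour, `R` bounds its extent, and `M = R / ε` bounds the distance to
  -- the new point
  obtain ⟨μ, hμ⟩ : ∃ μ, μ = ε ^ 2 / 4096 := ⟨_, rfl⟩
  obtain ⟨M, hM⟩ : ∃ M, M = 8192 * ρ / ε ^ 3 := ⟨_, rfl⟩
  obtain ⟨R, hR⟩ : ∃ R, R = ε * M := ⟨_, rfl⟩
  obtain ⟨δ, hδ⟩ : ∃ δ, δ = ε * ρ / 32 := ⟨_, rfl⟩
  rw [← hM] at hv1s hv1r
  have hμ0 : 0 < μ := by rw [hμ]; positivity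
  have hM0 : 0 < M := by rw [hM]; positivity
  have hR0 : 0 < R := by rw [hR]; positivity
  have hδ0 : 0 < δ := by rw [hδ]; positivity
  have hμε : μ ≤ ε / 4096 := by rw [hμ]; nlinarith
  have hMε : ε ^ 3 * M = 8192 * ρ := by rw [hM]; field_simp
  have hMε4 : ε ^ 4 * M = 8192 * (ε * ρ) := by linear_combination ε * hMε
  have hμR : μ * R = 2 * ρ := by rw [hμ, hR]; linear_combination hMε / 4096
  have hRM : R ≤ M := by rw [hR]; nlinarith
  have hρR : 2 * ρ ≤ R := by
    rw [← hμR]; exact mul_le_of_le_one_left hR0.le (by linarith)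
  have hδρ : δ ≤ ρ := by rw [hδ]; nlinarith
  have hMr : M ≤ r / 120 := by
    have : ε * r ≤ r := mul_le_of_le_one_left hr.le hε1
    linarith
  have hRr : R ≤ r := by linarith
  have hRS : R / ε = M := by rw [hR]; field_simp
  -- the three dense lines, as graphs over the direction `e`
  obtain ⟨δ', hδ'⟩ : ∃ δ', δ' = min (δ / (r + 1)) (μ / 4) := ⟨_, rfl⟩
  have hδ'0 : 0 < δ' := by rw [hδ']; positivity
  have hδ'1 : δ' * (r + 1) ≤ δ := by
    rw [← le_div_iff₀ (by positivity), hδ']; exact min_le_left _ _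
  have hδ'2 : δ' ≤ μ / 4 := by rw [hδ']; exact min_le_right _ _
  obtain ⟨a₀, b₀, ha₀, hb₀, hD₀⟩ := exists_graph hs hC hC1 hD hf x (a := 0) (b := 0)
    (hcone 0 (by rw [abs_zero]; positivity)) hδ'0
  obtain ⟨a₁, b₁, ha₁, hb₁, hD₁⟩ := exists_graph hs hC hC1 hD hf x (a := μ) (b := v₂ - μ * v₁)
    (hcone μ (by rw [abs_of_pos hμ0, hμ])) hδ'0
  obtain ⟨a₂, b₂, ha₂, hb₂, hD₂⟩ := exists_graph hs hC hC1 hD hf x (a := -μ) (b := v₂ + μ * v₁)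
    (hcone (-μ) (by rw [abs_neg, abs_of_pos hμ0, hμ])) hδ'0
  have hnear : ∀ {a a' b b' t : ℝ}, |a' - a| < δ' → |b' - b| < δ' → |t| ≤ r →
      |a' * t + b' - (a * t + b)| ≤ δ := by
    intro a a' b b' t h1 h2 h3
    rw [show a' * t + b' - (a * t + b) = (a' - a) * t + (b' - b) by ring]
    refine (abs_add_le _ _).trans ?_
    rw [abs_mul]
    have := mul_le_mul h1.le h3 (abs_nonneg _) hδ'0.le
    linarith
  set Y := roof a₀ b₀ a₁ b₁ a₂ b₂ with hY
  set T := roof 0 0 μ (v₂ - μ * v₁) (-μ) (v₂ + μ * v₁) with hT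
  have hYT : ∀ t, |t| ≤ r → |Y t - T t| ≤ δ := fun t ht =>
    roof_close _ _ _ _ _ _ _ _ _ _ _ _ _ _ _ (hnear ha₀ hb₀ ht) (hnear ha₁ hb₁ ht)
      (hnear ha₂ hb₂ ht)
  rw [abs_lt] at ha₀ ha₁ ha₂
  have ha₀' : |a₀| ≤ 2 * μ := abs_le.2 ⟨by linarith, by linarith⟩
  have ha₁' : |a₁| ≤ 2 * μ := abs_le.2 ⟨by linarith, by linarith⟩
  have ha₂' : |a₂| ≤ 2 * μ := abs_le.2 ⟨by linarith, by linarith⟩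
  have hYL : ∀ s t, |Y s - Y t| ≤ 2 * μ * |s - t| := roof_lip ha₀' ha₁' ha₂'
  obtain ⟨hv₁a, hv₁b⟩ := abs_le.1 hv₁ρ
  have hμv : |μ * v₁| ≤ ρ := by
    rw [abs_mul, abs_of_pos hμ0]
    calc μ * |v₁| ≤ 1 * ρ := by gcongr; linarith
      _ = ρ := one_mul ρ
  obtain ⟨hμv2, hμv1⟩ := abs_le.1 hμv
  have hT1 : ∀ t, R ≤ t → T t = 0 := by
    intro t ht
    have : μ * R ≤ μ * t := by gcongr
    rw [hT, roof, max_eq_left]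
    · ring
    · exact (min_le_right _ _).trans (by linarith)
  have hT2 : ∀ t, R ≤ t → T (-t) = 0 := by
    intro t ht
    have : μ * R ≤ μ * t := by gcongr
    rw [hT, roof, max_eq_left]
    · ring
    · exact (min_le_left _ _).trans (by linarith)
  have hT3 : T v₁ = v₂ := by
    rw [hT, roof, show μ * v₁ + (v₂ - μ * v₁) = v₂ by ring,
      show -μ * v₁ + (v₂ + μ * v₁) = v₂ by ring, min_self, max_eq_right]
    simpa using hvn
  have hY1 : ∀ t, R ≤ t → t ≤ r → |Y t| ≤ δ := by
    intro t h1 h2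
    have := hYT t (abs_le.2 ⟨by linarith, h2⟩)
    rwa [hT1 t h1, sub_zero] at this
  have hY2 : ∀ t, R ≤ t → t ≤ r → |Y (-t)| ≤ δ := by
    intro t h1 h2
    have := hYT (-t) (abs_le.2 ⟨by linarith, by linarith⟩)
    rwa [hT2 t h1, sub_zero] at this
  -- the increments of `h` along the path, minus the linear part
  set ψ : ℝ → ℝ := fun t => h (x + t • e + Y t • n) - m * t - h x with hψ
  have hoff : ∀ t, |h (x + t • e + Y t • n) - h (x + t • e)| ≤ |Y t| := by
    intro t
    refine (lip_sub hh _ _).trans_eq ?_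
    rw [add_sub_cancel_left, norm_smul, hf.norm_n, mul_one, Real.norm_eq_abs]
  have hmove : ∀ t, |h (x + t • e) - h x| ≤ |t| := by
    intro t
    refine (lip_sub hh _ _).trans_eq ?_
    rw [add_sub_cancel_left, norm_smul, hf.norm_e, mul_one, Real.norm_eq_abs]
  have hψL : LipschitzWith 3 ψ := by
    refine LipschitzWith.of_dist_le_mul fun t t' => ?_
    rw [Real.dist_eq, Real.dist_eq]
    have h1 : |h (x + t • e + Y t • n) - h (x + t' • e + Y t' • n)| ≤ 2 * |t - t'| := by
      refine (lip_sub hh _ _).trans ?_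
      rw [show x + t • e + Y t • n - (x + t' • e + Y t' • n) = (t - t') • e + (Y t - Y t') • n by
        module]
      refine (norm_add_le _ _).trans ?_
      rw [norm_smul, norm_smul, hf.norm_e, hf.norm_n, mul_one, mul_one, Real.norm_eq_abs,
        Real.norm_eq_abs]
      have h6 : 2 * μ * |t - t'| ≤ 1 * |t - t'| := by gcongr; linarith
      linarith [hYL t t']
    have h2 : |m * (t - t')| ≤ |t - t'| := by
      rw [abs_mul]
      exact mul_le_of_le_one_left (abs_nonneg _) hm
    have h3 : ψ t - ψ t' = (h (x + t • e + Y t • n) - h (x + t' • e + Y t' • n)) -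
        m * (t - t') := by simp only [hψ]; ring
    rw [h3]
    refine (abs_sub _ _).trans ?_
    rw [NNReal.coe_ofNat]
    linarith
  obtain ⟨hm1, hm2⟩ := abs_le.1 hm
  have hA : ε * ρ - δ ≤ |ψ v₁| := by
    have h1 : |h (x + v₁ • e + Y v₁ • n) - h (x + v)| ≤ δ := by
      refine (lip_sub hh _ _).trans ?_
      have : x + v₁ • e + Y v₁ • n - (x + v) = (Y v₁ - T v₁) • n := by
        conv_lhs => rw [hf.expand v]
        rw [hT3]
        module
      rw [this, norm_smul, hf.norm_n, mul_one, Real.norm_eq_abs]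
      exact hYT v₁ (by linarith)
    have h2 := abs_sub_abs_le_abs_sub (h (x + v) - h x - m * v₁) (ψ v₁)
    have h3 : h (x + v) - h x - m * v₁ - ψ v₁ = h (x + v) - h (x + v₁ • e + Y v₁ • n) := by
      simp only [hψ]; ring
    rw [abs_sub_comm] at h1
    rw [h3] at h2
    linarith
  have hκε : κ ≤ ε / 2 := by
    have : ε ^ 4 ≤ ε := by
      have := pow_le_one₀ (n := 3) hε.le hε1
      nlinarith
    norm_num at hκ
    linarith
  have hβ0 : 0 < ε ^ 4 / 2 ^ 21 := by positivity
  have hκM : κ * M ≤ ε * ρ / 128 := by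
    have : κ * M ≤ ε ^ 4 / 2 ^ 20 * M := by gcongr
    norm_num at this
    linarith
  obtain ⟨τ, hτ, hτN, u, hu, hder, hslope⟩ := one_dim_global hψL (R := R) (r := r) (S := ε)
    (κ := κ) (δ := δ) (β := ε ^ 4 / 2 ^ 21) (A := ε * ρ - δ) (c := v₁)
    (crossing_null (b₀ := b₀) (b₁ := b₁) (b₂ := b₂) (a₀ := a₀) (a₁ := a₁) (a₂ := a₂)
      (by linarith) (by linarith) (by linarith)) hβ0 hε hε1 hκ0 hκε hδ0.le
    (by linarith) hRr (by linarith)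
    (by
      intro t h1 h2
      have h3 := (hsl t (by linarith) h2).1
      have h4 := (abs_le.1 (hoff t)).1
      have h5 := hY1 t h1 h2
      simp only [hψ]
      linarith)
    (by
      intro t h1 h2
      have h3 := (hsl t (by linarith) h2).2
      have h4 := (abs_le.1 (hoff (-t))).2
      have h5 := hY2 t h1 h2
      rw [sub_eq_add_neg x, ← neg_smul] at h3
      simp only [hψ]
      linarith)
    (by
      have h3 := (abs_le.1 (hmove R)).2
      have h4 := (abs_le.1 (hoff R)).2
      have h5 := hY1 R le_rfl hRr
      rw [abs_of_pos hR0] at h3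
      have h6 : -1 * R ≤ m * R := by gcongr
      simp only [hψ]
      linarith)
    (by
      have h3 := (abs_le.1 (hmove (-R))).1
      have h4 := (abs_le.1 (hoff (-R))).1
      have h5 := hY2 R le_rfl hRr
      rw [abs_neg, abs_of_pos hR0] at h3
      have h6 : -1 * R ≤ m * R := by gcongr
      simp only [hψ]
      linarith) hA
    (by
      rw [hRS]
      have e1 : 40 * (ε ^ 4 / 2 ^ 21) * M = 40 * (ε * ρ) / 256 := by
        linear_combination 40 / 2 ^ 21 * hMε4
      have e2 : 0 < ε * ρ := by positivity
      rw [e1, hδ]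
      linarith)
  rw [hRS] at hτ
  have hτN' : ¬ (a₀ * τ + b₀ = a₁ * τ + b₁ ∨ a₀ * τ + b₀ = a₂ * τ + b₂ ∨
      a₁ * τ + b₁ = a₂ * τ + b₂) := hτN
  push Not at hτN'
  obtain ⟨p, hp, hpY⟩ := roof_local hτN'.1 hτN'.2.1 hτN'.2.2
  have hpa : |p.1| ≤ 2 * μ ∧ ∀ s : ℝ, (x + s • e + (p.1 * s + p.2) • n, dir e n p.1) ∈ D := by
    rcases hp with rfl | rfl | rfl
    exacts [⟨ha₀', hD₀⟩, ⟨ha₁', hD₁⟩, ⟨ha₂', hD₂⟩]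
  have hμu : 4 * μ ^ 2 ≤ u := by
    refine le_trans ?_ hu.le
    rw [hμ]
    have : 0 < ε ^ 4 := by positivity
    norm_num
    linarith
  obtain ⟨m', hm', hum⟩ := deriv_candidate hh hf hpY hpa.1 hμu hder
  have hdist : ‖x + τ • e + Y τ • n - x‖ ≤ 30 * M := by
    rw [show x + τ • e + Y τ • n - x = τ • e + Y τ • n by module]
    refine (norm_add_le _ _).trans ?_
    rw [norm_smul, norm_smul, hf.norm_e, hf.norm_n, mul_one, mul_one, Real.norm_eq_abs,
      Real.norm_eq_abs]
    have h1 := hYL τ R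
    have h2 : |τ - R| ≤ 11 * M := by
      refine (abs_sub _ _).trans ?_
      rw [abs_of_pos hR0]
      linarith
    have h3 := hY1 R le_rfl hRr
    have h4 : |Y τ| ≤ |Y τ - Y R| + |Y R| := by
      simpa using abs_add_le (Y τ - Y R) (Y R)
    have h5 : 2 * μ * |τ - R| ≤ 1 * (11 * M) := by
      gcongr
      linarith
    linarith
  have hg : ε ^ 4 / 2 ^ 22 < m' - m := by
    have : ε ^ 4 / 2 ^ 21 = 2 * (ε ^ 4 / 2 ^ 22) := by ring
    linarith
  have hg0 : 0 < m' - m := lt_trans (by positivity) hg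
  have hl1 : 80 * √u ≤ 120 * √(m' - m) := by
    have h1 : √u ≤ 3 / 2 * √(m' - m) := by
      rw [Real.sqrt_le_left (by positivity), mul_pow, Real.sq_sqrt hg0.le]
      linarith
    linarith
  have hl2 : 3 * ε ≤ 140 * √√(m' - m) := by
    have h1 : ε / 46 ≤ √√(m' - m) := by
      refine Real.le_sqrt_of_sq_le (Real.le_sqrt_of_sq_le ?_)
      refine le_trans ?_ hg.le
      rw [← pow_mul, div_pow]
      norm_num
      gcongr
      norm_num
    linarith
  refine ⟨x + τ • e + Y τ • n, dir e n p.1, m', ?_, by linarith, hm', hg, ?_⟩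
  · have := hpa.2 τ
    rwa [← hpY.eq_of_nhds] at this
  · have hs1 := Real.sqrt_nonneg (m' - m)
    refine slope_candidate hh hf (lam := ε + 80 * √u) (S := ε) hYL hsl (by linarith)
      (hdist.trans (by linarith)) hr hslope ?_ ?_
    · rw [loss]; linarith
    · rw [loss]; linarith

/-! ### Stages of the iteration -/

/-- The function `f` tilted by the linear form `⟪p, ·⟫`. -/
def tilt (f : E2 → ℝ) (p y : E2) : ℝ := f y + ⟪p, y⟫

/-- A stage of the iteration: the tilt `p`, the current point `x`, direction `e` and directional
derivative `m`, and the scales `r` (for slopes) and `s` (for the position of candidates). -/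
structure Stage where
  p : E2
  x : E2
  e : E2
  m : ℝ
  r : ℝ
  s : ℝ

/-- `(x', e')` is a candidate for the stage `q`, with directional derivative `m'`: it belongs to
`D`, is close to `q.x`, does not decrease the derivative, and keeps the slopes in the *old*
direction `q.e` above `q.m`, up to the loss allowed by the gain of derivative and to an error
strictly below `σ`. -/
def Cand (f : E2 → ℝ) (D : Set (E2 × E2)) (σ : ℝ) (q : Stage) (x' e' : E2) (m' : ℝ) : Prop :=
  (x', e') ∈ D ∧ ‖x' - q.x‖ < q.s ∧ HasDerivAt (fun t : ℝ => tilt f q.p (x' + t • e')) m' 0 ∧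
    q.m ≤ m' ∧ ∃ σ' < σ, Slope (tilt f q.p) x' q.e q.r (q.m - σ' - loss (m' - q.m))

lemma loss_mono {a b : ℝ} (h : a ≤ b) : loss a ≤ loss b := by
  unfold loss; gcongr

lemma loss_zero : loss 0 = 0 := by simp [loss]

lemma tilt_add (f : E2 → ℝ) (p q y : E2) : tilt f (p + q) y = tilt f p y + ⟪q, y⟫ := by
  rw [tilt, tilt, inner_add_left, add_assoc]

lemma slope_of_hasDerivAt {h : E2 → ℝ} {x e : E2} {m : ℝ}
    (hd : HasDerivAt (fun t : ℝ => h (x + t • e)) m 0) {σ : ℝ} (hσ : 0 < σ) :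
    ∃ r > 0, Slope h x e r (m - σ) := by
  have h1 := (hasDerivAt_iff_isLittleO.1 hd).bound hσ
  obtain ⟨r, hr, hb⟩ := Metric.eventually_nhds_iff.1 h1
  refine ⟨r / 2, by positivity, fun t ht htr => ⟨?_, ?_⟩⟩
  · have := hb (y := t) (by simp [abs_of_pos ht]; linarith)
    simp only [sub_zero, Real.norm_eq_abs, zero_smul, add_zero, smul_eq_mul, abs_of_pos ht] at this
    linarith [(abs_le.1 this).1]
  · have := hb (y := -t) (by simp [abs_of_pos ht]; linarith)
    simp only [sub_zero, Real.norm_eq_abs, zero_smul, add_zero, smul_eq_mul, abs_neg,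
      abs_of_pos ht, neg_smul, ← sub_eq_add_neg] at this
    linarith [(abs_le.1 this).2]

lemma hasDerivAt_tilt_add {f : E2 → ℝ} {p q x e : E2} {m : ℝ}
    (hd : HasDerivAt (fun t : ℝ => tilt f p (x + t • e)) m 0) :
    HasDerivAt (fun t : ℝ => tilt f (p + q) (x + t • e)) (m + ⟪q, e⟫) 0 := by
  have h1 : HasDerivAt (fun t : ℝ => ⟪q, x⟫ + t * ⟪q, e⟫) ⟪q, e⟫ 0 := by
    simpa using ((hasDerivAt_id (0 : ℝ)).mul_const ⟪q, e⟫).const_add ⟪q, x⟫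
  refine (hd.add h1).congr_of_eventuallyEq (Eventually.of_forall fun t => ?_)
  simp only [Pi.add_apply, tilt_add, inner_add_right, inner_smul_right]

lemma abs_deriv_le {h : E2 → ℝ} (hh : LipschitzWith 1 h) {x e : E2} (he : ‖e‖ = 1) {m : ℝ}
    (hd : HasDerivAt (fun t : ℝ => h (x + t • e)) m 0) : |m| ≤ 1 := by
  have hlip : LipschitzWith 1 (fun t : ℝ => h (x + t • e)) := by
    refine LipschitzWith.of_dist_le_mul fun s t => ?_
    rw [Real.dist_eq, Real.dist_eq]
    refine (lip_sub hh _ _).trans ?_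
    rw [show x + s • e - (x + t • e) = (s - t) • e by module, norm_smul, he]
    simp
  have := norm_deriv_le_of_lipschitz (x₀ := 0) hlip
  rw [hd.deriv] at this
  simpa using this

set_option maxHeartbeats 400000 in
/-- One step of the iteration. The new stage is a candidate of `q` whose derivative is maximal up to
`W₁`, and the function is tilted by `t` times its direction. By near-maximality, the candidates of
the new stage gain at most `W₁`; as the tilt penalises other directions by `t ‖e' - e₁‖² / 2`,
their directions are close to the new one. They are again candidates of `q`: slopes at scales
`≤ q₁.r` come from the slopes at the new stage, and those at larger scales from the slopes
of `q` at `q₁.x`, since candidates are very close to `q₁.x`. -/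
lemma step {f : E2 → ℝ} {D : Set (E2 × E2)} {σ σ₁ t W W₁ : ℝ} (hDn : ∀ p ∈ D, ‖p.2‖ = 1)
    (hσ₁ : 0 < σ₁) (hσ₁σ : σ₁ ≤ σ / 4) (ht : 0 < t) (hW₁ : 0 < W₁) (hWt : 8 * W₁ ≤ t * σ₁ ^ 2)
    {q : Stage} (hL : LipschitzWith 1 (tilt f q.p)) (hr : 0 < q.r) (hs : 0 < q.s)
    (hq : Cand f D σ q q.x q.e q.m)
    (hQ : ∀ x' e' m', Cand f D σ q x' e' m' → m' - q.m ≤ W ∧ ‖e' - q.e‖ ≤ σ / 2)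
    {U : Set E2} (hU : IsOpen U) (hDU : ∀ p ∈ D, p.1 ∈ U) :
    ∃ q₁ : Stage, q₁.p = q.p + t • q₁.e ∧ 0 < q₁.r ∧ 0 < q₁.s ∧ q₁.s ≤ q.s / 2 ∧
      closedBall q₁.x q₁.s ⊆ ball q.x q.s ∧ ball q₁.x q₁.s ⊆ U ∧
      Cand f D σ₁ q₁ q₁.x q₁.e q₁.m ∧
      (∀ x' e' m', Cand f D σ₁ q₁ x' e' m' → m' - q₁.m ≤ W₁ ∧ ‖e' - q₁.e‖ ≤ σ₁ / 2) ∧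
      (∀ x' e' m', Cand f D σ₁ q₁ x' e' m' → ∃ m'', Cand f D σ q x' e' m'') := by
  -- the directional derivatives of all candidates
  set B : Set ℝ := {m' | ∃ x' e', Cand f D σ q x' e' m'} with hB
  have hBne : B.Nonempty := ⟨_, _, _, hq⟩
  have hBb : BddAbove B := ⟨q.m + W, by
    rintro m' ⟨x', e', hc⟩
    linarith [(hQ _ _ _ hc).1]⟩
  obtain ⟨m₀, ⟨x₁, e₁, hc₁⟩, hm₀⟩ := exists_lt_of_lt_csSup hBne (sub_lt_self (sSup B) hW₁)
  obtain ⟨hD₁, hx₁, hd₁, hm₁, σ', hσ', hsl₁⟩ := id hc₁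
  have he₁ : ‖e₁‖ = 1 := hDn (x₁, e₁) hD₁
  have hee : ⟪t • e₁, e₁⟫ = t := by
    rw [real_inner_smul_left, real_inner_self_eq_norm_sq, he₁]; ring
  have hd₂ : HasDerivAt (fun a : ℝ => tilt f (q.p + t • e₁) (x₁ + a • e₁)) (m₀ + t) 0 := by
    simpa only [hee] using hasDerivAt_tilt_add (q := t • e₁) hd₁
  obtain ⟨r₀, hr₀, hsl₂⟩ := slope_of_hasDerivAt hd₂ (half_pos hσ₁)
  obtain ⟨ε, hε, hεU⟩ := Metric.isOpen_iff.1 hU x₁ (hDU (x₁, e₁) hD₁)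
  obtain ⟨r₁, hr₁⟩ : ∃ r₁, r₁ = min q.r r₀ := ⟨_, rfl⟩
  have hr₁0 : 0 < r₁ := by rw [hr₁]; exact lt_min hr hr₀
  have hr₁q : r₁ ≤ q.r := by rw [hr₁]; exact min_le_left _ _
  have hr₁0' : r₁ ≤ r₀ := by rw [hr₁]; exact min_le_right _ _
  have hgap : 0 < σ - σ' := sub_pos.2 hσ'
  have hgap2 : 0 < q.s - ‖x₁ - q.x‖ := sub_pos.2 hx₁
  obtain ⟨s₁, hs₁0, hs₁a⟩ : ∃ s₁ > 0, s₁ < min (min ((σ - σ') * r₁ / 4) (q.s - ‖x₁ - q.x‖))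
      (min ε (q.s / 2)) := exists_between (by positivity)
  simp only [lt_min_iff] at hs₁a
  obtain ⟨⟨hs₁r, hs₁x⟩, hs₁ε, hs₁s⟩ := hs₁a
  have hnest : ∀ x' e' m', Cand f D σ₁ ⟨q.p + t • e₁, x₁, e₁, m₀ + t, r₁, s₁⟩ x' e' m' →
      Cand f D σ q x' e' (m' - t * ⟪e₁, e'⟫) := by
    rintro x' e' m' ⟨hD', hx', hd', hm', σ'', hσ'', hsl'⟩
    simp only at hx' hd' hm' hsl'
    have hin : ⟪e₁, e'⟫ ≤ 1 := by
      have := real_inner_le_norm e₁ e'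
      rwa [he₁, hDn (x', e') hD', mul_one] at this
    have htin : t * ⟪e₁, e'⟫ ≤ t := mul_le_of_le_one_right ht.le hin
    refine ⟨hD', ?_, ?_, by linarith, max (3 / 4 * σ) ((σ + σ') / 2),
      max_lt (by linarith) (by linarith), ?_⟩
    · have : ‖x' - q.x‖ ≤ ‖x' - x₁‖ + ‖x₁ - q.x‖ := norm_sub_le_norm_sub_add_norm_sub _ _ _
      linarith
    · have h1 := hasDerivAt_tilt_add (q := -(t • e₁)) hd'
      rw [add_neg_cancel_right, inner_neg_left, real_inner_smul_left, ← sub_eq_add_neg] at h1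
      exact h1
    intro a ha har
    have hl1 : loss (m' - (m₀ + t)) ≤ loss (m' - t * ⟪e₁, e'⟫ - q.m) := loss_mono (by linarith)
    have hl2 : loss (m₀ - q.m) ≤ loss (m' - t * ⟪e₁, e'⟫ - q.m) := loss_mono (by linarith)
    set l := loss (m' - t * ⟪e₁, e'⟫ - q.m)
    set sg := max (3 / 4 * σ) ((σ + σ') / 2) with hsg
    have hsg1 : 3 / 4 * σ ≤ sg := le_max_left _ _
    have hsg2 : (σ + σ') / 2 ≤ sg := le_max_right _ _
    -- small scales use the new slopes, large scales the slopes of `q` at `x₁`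
    rcases le_total a r₁ with har₁ | har₁
    · obtain ⟨h1, h2⟩ := hsl' a ha har₁
      simp only [tilt_add, inner_add_right, inner_sub_right, inner_smul_right,
        real_inner_smul_left, real_inner_self_eq_norm_sq, he₁] at h1 h2
      have hed : ‖e₁ - q.e‖ ≤ σ / 2 := (hQ _ _ _ hc₁).2
      have h3 := (lip_sub hL (x' + a • e₁) (x' + a • q.e))
      rw [show x' + a • e₁ - (x' + a • q.e) = a • (e₁ - q.e) by module, norm_smul,
        Real.norm_eq_abs, abs_of_pos ha] at h3
      have h4 := (lip_sub hL (x' - a • e₁) (x' - a • q.e))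
      rw [show x' - a • e₁ - (x' - a • q.e) = (-a) • (e₁ - q.e) by module, norm_smul,
        Real.norm_eq_abs, abs_neg, abs_of_pos ha] at h4
      have h5 : a * ‖e₁ - q.e‖ ≤ a * (σ / 2) := by gcongr
      have h6 : (q.m - sg - l) * a ≤ (m₀ + t - σ'' - loss (m' - (m₀ + t))) * a - t * a -
          a * (σ / 2) := by
        have : (q.m - sg - l) * a ≤ (m₀ + t - σ'' - loss (m' - (m₀ + t)) - t - σ / 2) * a := 
          mul_le_mul_of_nonneg_right (by linarith) ha.le
        linarith
      have h7 := abs_le.1 h3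
      have h8 := abs_le.1 h4
      constructor <;> linarith
    · obtain ⟨h1, h2⟩ := hsl₁ a ha har
      have key : ∀ y : E2, |tilt f q.p (x' + y) - tilt f q.p (x₁ + y)| ≤ s₁ := by
        intro y
        refine (lip_sub hL _ _).trans ?_
        rw [add_sub_add_right_eq_sub]
        exact hx'.le
      have h3 := abs_le.1 (key 0)
      have h4 := abs_le.1 (key (a • q.e))
      have h5 := abs_le.1 (key (-(a • q.e)))
      rw [add_zero, add_zero] at h3
      rw [← sub_eq_add_neg, ← sub_eq_add_neg] at h5
      have h6 : (q.m - sg - l) * a ≤ (q.m - σ' - loss (m₀ - q.m)) * a - (σ - σ') / 2 * a := by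
        have : (q.m - sg - l) * a ≤ (q.m - σ' - loss (m₀ - q.m) - (σ - σ') / 2) * a := 
          mul_le_mul_of_nonneg_right (by linarith) ha.le
        linarith
      have h7 : (σ - σ') / 2 * r₁ ≤ (σ - σ') / 2 * a := by gcongr
      constructor <;> linarith
  refine ⟨⟨q.p + t • e₁, x₁, e₁, m₀ + t, r₁, s₁⟩, rfl, hr₁0, hs₁0, hs₁s.le, ?_, ?_, ?_, ?_,
    fun x' e' m' h => ⟨_, hnest x' e' m' h⟩⟩
  · intro y hy
    rw [mem_closedBall, dist_eq_norm] at hy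
    rw [mem_ball, dist_eq_norm]
    have : ‖y - q.x‖ ≤ ‖y - x₁‖ + ‖x₁ - q.x‖ := norm_sub_le_norm_sub_add_norm_sub _ _ _
    simp only at hy
    linarith
  · exact (ball_subset_ball hs₁ε.le).trans hεU
  · refine ⟨hD₁, by simpa using hs₁0, hd₂, le_rfl, σ₁ / 2, by linarith, ?_⟩
    simp only [sub_self, loss_zero, sub_zero]
    exact fun a ha har => hsl₂ a ha (har.trans hr₁0')
  · intro x' e' m' hc
    have hle : m' - t * ⟪e₁, e'⟫ ≤ sSup B := le_csSup hBb ⟨_, _, hnest _ _ _ hc⟩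
    have hm' : m₀ + t ≤ m' := hc.2.2.2.1
    have he' : ‖e'‖ = 1 := hDn (x', e') hc.1
    have hin : ⟪e₁, e'⟫ ≤ 1 := by
      have := real_inner_le_norm e₁ e'
      rwa [he₁, he', mul_one] at this
    have htin : t * ⟪e₁, e'⟫ ≤ t := mul_le_of_le_one_right ht.le hin
    refine ⟨by simp only; linarith, ?_⟩
    have h1 : ‖e' - e₁‖ ^ 2 = 2 - 2 * ⟪e₁, e'⟫ := by
      rw [norm_sub_sq_real, he', he₁, real_inner_comm]; ring
    refine (sq_le_sq₀ (norm_nonneg _) (by positivity)).1 ?_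
    simp only
    rw [h1]
    have h2 : t * (2 - 2 * ⟪e₁, e'⟫) ≤ t * (σ₁ / 2) ^ 2 := by linarith
    exact le_of_mul_le_mul_left h2 ht

/-- The error allowed in the slopes of candidates of the `n`-th stage. -/
def sig (n : ℕ) : ℝ := 4 * (1 / 4) ^ n

/-- A bound for the gain of derivative of candidates of the `n`-th stage. -/
def gain (n : ℕ) : ℝ := 2 * (1 / 1024) ^ n

/-- The invariants of the `n`-th stage. -/
structure Good (f : E2 → ℝ) (D : Set (E2 × E2)) (U : ℕ → Set E2) (w : E2) (η : ℝ) (n : ℕ)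
    (q : Stage) : Prop where
  self : Cand f D (sig n) q q.x q.e q.m
  r_pos : 0 < q.r
  s_pos : 0 < q.s
  bound : ∀ x' e' m', Cand f D (sig n) q x' e' m' → m' - q.m ≤ gain n ∧ ‖e' - q.e‖ ≤ sig n / 2
  norm_p : ‖q.p‖ ≤ 1 / 2 - 1 / 4 * (1 / 2) ^ n
  sub : ball q.x q.s ⊆ U n
  dir_mem : ∀ x' e' m', Cand f D (sig n) q x' e' m' → 1 - η / 2 ≤ ⟪e', w⟫

lemma sig_pos (n : ℕ) : 0 < sig n := by unfold sig; positivity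

lemma gain_pos (n : ℕ) : 0 < gain n := by unfold gain; positivity

lemma tilt_lip {f : E2 → ℝ} {η : ℝ} (hη : η ≤ 1) (hf : ∀ y z, |f y - f z| ≤ η / 32 * ‖y - z‖)
    {p : E2} (hp : ‖p‖ ≤ 1 / 2) : LipschitzWith 1 (tilt f p) := by
  refine LipschitzWith.of_dist_le_mul fun y z => ?_
  rw [Real.dist_eq, dist_eq_norm, NNReal.coe_one, one_mul, tilt, tilt,
    show f y + ⟪p, y⟫ - (f z + ⟪p, z⟫) = (f y - f z) + ⟪p, y - z⟫ by rw [inner_sub_right]; ring]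
  refine (abs_add_le _ _).trans ?_
  have h1 := hf y z
  have h2 := abs_real_inner_le_norm p (y - z)
  have h3 : ‖p‖ * ‖y - z‖ ≤ 1 / 2 * ‖y - z‖ := by gcongr
  have h4 : η / 32 * ‖y - z‖ ≤ 1 / 32 * ‖y - z‖ := by gcongr
  have := norm_nonneg (y - z)
  linarith

lemma Good.lip {f : E2 → ℝ} {D : Set (E2 × E2)} {U : ℕ → Set E2} {w : E2} {η : ℝ} {n : ℕ}
    {q : Stage} (hq : Good f D U w η n q) (hη : η ≤ 1)
    (hf : ∀ y z, |f y - f z| ≤ η / 32 * ‖y - z‖) : LipschitzWith 1 (tilt f q.p) :=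
  tilt_lip hη hf (hq.norm_p.trans (by linarith [show (0 : ℝ) < (1 / 2) ^ n by positivity]))

/-- The relation between a stage and the next one. -/
structure Next (f : E2 → ℝ) (D : Set (E2 × E2)) (n : ℕ) (q q' : Stage) : Prop where
  s_le : q'.s ≤ q.s / 2
  sub : closedBall q'.x q'.s ⊆ ball q.x q.s
  cand : ∀ x' e' m', Cand f D (sig (n + 1)) q' x' e' m' → ∃ m'', Cand f D (sig n) q x' e' m''

lemma Good.next {f : E2 → ℝ} {D : Set (E2 × E2)} {U : ℕ → Set E2} {w : E2} {η : ℝ} {n : ℕ}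
    {q : Stage} (hq : Good f D U w η n q) (hη : η ≤ 1)
    (hf : ∀ y z, |f y - f z| ≤ η / 32 * ‖y - z‖) (hDn : ∀ p ∈ D, ‖p.2‖ = 1)
    (hU : ∀ n, IsOpen (U n)) (hDU : ∀ n, ∀ p ∈ D, p.1 ∈ U n) :
    ∃ q', Good f D U w η (n + 1) q' ∧ Next f D n q q' := by
  have hpow : (1 / 1024 : ℝ) ^ n ≤ (1 / 32) ^ n :=
    pow_le_pow_left₀ (by norm_num) (by norm_num) _
  have hpow' : (1 / 32 : ℝ) ^ n = (1 / 2) ^ n * ((1 / 4) ^ n) ^ 2 := by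
    rw [← pow_mul, mul_comm n 2, pow_mul, ← mul_pow]; norm_num
  obtain ⟨q₁, hp, hr, hs, hss, hsub, hU', hself, hb, hnest⟩ :=
    step (σ₁ := sig (n + 1)) (t := 1 / 8 * (1 / 2) ^ n) (W₁ := gain (n + 1)) hDn (sig_pos _)
      (by unfold sig; rw [pow_succ]; linarith) (by positivity) (gain_pos _)
      (by
        have : (0 : ℝ) < (1 / 32) ^ n := by positivity
        rw [show 1 / 8 * (1 / 2 : ℝ) ^ n * sig (n + 1) ^ 2 = 1 / 8 * (1 / 32) ^ n by
          rw [hpow', sig, pow_succ]; ring, gain, pow_succ]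
        linarith)
      (hq.lip hη hf) hq.r_pos hq.s_pos hq.self hq.bound (hU (n + 1)) (hDU (n + 1))
  refine ⟨q₁, ⟨hself, hr, hs, hb, ?_, hU', fun x' e' m' h => ?_⟩, hss, hsub, hnest⟩
  · have h1 : ‖q₁.e‖ = 1 := hDn (q₁.x, q₁.e) hself.1
    have h2 := hq.norm_p
    have h3 := norm_add_le q.p ((1 / 8 * (1 / 2 : ℝ) ^ n) • q₁.e)
    rw [norm_smul, h1, Real.norm_eq_abs, abs_of_pos (by positivity)] at h3
    rw [hp, pow_succ]
    linarith
  · obtain ⟨m'', h'⟩ := hnest _ _ _ h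
    exact hq.dir_mem _ _ _ h'

lemma exists_stages {f : E2 → ℝ} {D : Set (E2 × E2)} {U : ℕ → Set E2} {w : E2} {η : ℝ}
    {q₀ : Stage} (hq₀ : Good f D U w η 0 q₀) (hη : η ≤ 1)
    (hf : ∀ y z, |f y - f z| ≤ η / 32 * ‖y - z‖) (hDn : ∀ p ∈ D, ‖p.2‖ = 1)
    (hU : ∀ n, IsOpen (U n)) (hDU : ∀ n, ∀ p ∈ D, p.1 ∈ U n) :
    ∃ q : ℕ → Stage, (∀ n, Good f D U w η n (q n)) ∧ ∀ n, Next f D n (q n) (q (n + 1)) := by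
  choose F hF₁ hF₂ using fun n (q : {q // Good f D U w η n q}) =>
    q.2.next hη hf hDn hU hDU
  let Q : ∀ n, {q // Good f D U w η n q} := fun n =>
    Nat.rec ⟨q₀, hq₀⟩ (fun n q => ⟨F n q, hF₁ n q⟩) n
  exact ⟨fun n => (Q n).1, fun n => (Q n).2, fun n => hF₂ n (Q n)⟩

lemma nested {f : E2 → ℝ} {D : Set (E2 × E2)} {q : ℕ → Stage}
    (hq : ∀ n, Next f D n (q n) (q (n + 1))) {n k : ℕ} (hnk : n ≤ k) {x' e' : E2} {m' : ℝ}
    (h : Cand f D (sig k) (q k) x' e' m') : ∃ m'', Cand f D (sig n) (q n) x' e' m'' := by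
  induction k, hnk using Nat.le_induction generalizing m' with
  | base => exact ⟨m', h⟩
  | succ k _ ih =>
    obtain ⟨m'', h''⟩ := (hq k).cand _ _ _ h
    exact ih h''

/-- The points of the stages converge to a point at which the slopes in the direction of the
`n`-th stage are still controlled. -/
lemma exists_limit {f : E2 → ℝ} {D : Set (E2 × E2)} {U : ℕ → Set E2} {w : E2} {η : ℝ} (hη : η ≤ 1)
    (hf : ∀ y z, |f y - f z| ≤ η / 32 * ‖y - z‖) {q : ℕ → Stage}
    (hg : ∀ n, Good f D U w η n (q n)) (hq : ∀ n, Next f D n (q n) (q (n + 1))) :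
    ∃ x : E2, ∀ n, x ∈ ball (q n).x (q n).s ∧
      Slope (tilt f (q n).p) x (q n).e (q n).r ((q n).m - (sig n + loss (gain n))) := by
  obtain ⟨x, hx⟩ : (⋂ n, closedBall (q n).x (q n).s).Nonempty :=
    IsCompact.nonempty_iInter_of_sequence_nonempty_isCompact_isClosed _
      (fun n => (hq n).sub.trans ball_subset_closedBall)
      (fun n => ⟨_, mem_closedBall_self (hg n).s_pos.le⟩) (isCompact_closedBall _ _)
      (fun n => isClosed_closedBall)
  rw [mem_iInter] at hx
  have hsn : ∀ n, (q n).s ≤ (q 0).s * (1 / 2) ^ n := by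
    intro n
    induction n with
    | zero => simp
    | succ n ih => rw [pow_succ]; linarith [(hq n).s_le]
  have hlim : Tendsto (fun n => (q n).x) atTop (𝓝 x) := by
    rw [tendsto_iff_dist_tendsto_zero]
    refine squeeze_zero (fun _ => dist_nonneg)
      (fun n => (dist_comm _ _).le.trans ((mem_closedBall.1 (hx n)).trans (hsn n))) ?_
    simpa using (tendsto_pow_atTop_nhds_zero_of_lt_one (r := (1 / 2 : ℝ)) (by norm_num)
      (by norm_num)).const_mul (q 0).s
  refine ⟨x, fun n => ⟨(hq n).sub (hx (n + 1)), ?_⟩⟩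
  have hc : Continuous (tilt f (q n).p) := ((hg n).lip hη hf).continuous
  have hk : ∀ᶠ k in atTop, Slope (tilt f (q n).p) (q k).x (q n).e (q n).r
      ((q n).m - (sig n + loss (gain n))) := by
    filter_upwards [eventually_ge_atTop n] with k hk
    obtain ⟨m'', hc⟩ := nested hq hk (hg k).self
    have hb := loss_mono ((hg n).bound _ _ _ hc).1
    obtain ⟨-, -, -, -, σ', hσ', hsl⟩ := hc
    intro t ht htr
    have h1 : ((q n).m - (sig n + loss (gain n))) * t ≤
        ((q n).m - σ' - loss (m'' - (q n).m)) * t :=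
      mul_le_mul_of_nonneg_right (by linarith) ht.le
    exact ⟨h1.trans (hsl t ht htr).1, h1.trans (hsl t ht htr).2⟩
  intro t ht htr
  constructor
  · refine ge_of_tendsto (((hc.tendsto _).comp (hlim.add_const (t • (q n).e))).sub
      ((hc.tendsto _).comp hlim)) ?_
    filter_upwards [hk] with k hk
    exact (hk t ht htr).1
  · refine ge_of_tendsto (((hc.tendsto _).comp hlim).sub
      ((hc.tendsto _).comp (hlim.sub_const (t • (q n).e)))) ?_
    filter_upwards [hk] with k hk
    exact (hk t ht htr).2

/-! ### Differentiability at the limit -/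

/-- A function which is approximated to first order by affine functions, up to arbitrarily small
multiples of the distance, is differentiable. -/
lemma differentiableAt_of_approx {f : E2 → ℝ} {x : E2}
    (h : ∀ k : ℕ, ∃ a : E2, ∀ᶠ v in 𝓝 (0 : E2),
      |f (x + v) - f x - ⟪a, v⟫| ≤ (1 / 2) ^ k * ‖v‖) : DifferentiableAt ℝ f x := by
  choose a ha using h
  have hdist : ∀ k, dist (a k) (a (k + 1)) ≤ 2 * (1 / 2) ^ k := by
    intro k
    set d := a k - a (k + 1) with hd
    have hev := (ha k).and (ha (k + 1))
    have hcont : Tendsto (fun t : ℝ => t • d) (𝓝[>] 0) (𝓝 0) := by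
      have : Tendsto (fun t : ℝ => t • d) (𝓝 0) (𝓝 ((0 : ℝ) • d)) :=
        (continuous_id.smul continuous_const).tendsto 0
      rw [zero_smul] at this
      exact this.mono_left nhdsWithin_le_nhds
    obtain ⟨t, ⟨h1, h2⟩, ht⟩ := ((hcont.eventually hev).and self_mem_nhdsWithin).exists
    have ht : 0 < t := ht
    have h3 : ⟪a k, t • d⟫ - ⟪a (k + 1), t • d⟫ = t * ‖d‖ ^ 2 := by
      rw [← inner_sub_left, ← hd, inner_smul_right, real_inner_self_eq_norm_sq]
    rw [norm_smul, Real.norm_eq_abs, abs_of_pos ht] at h1 h2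
    have h1' := abs_le.1 h1
    have h2' := abs_le.1 h2
    rw [pow_succ] at h2'
    rw [dist_eq_norm]
    rcases (norm_nonneg d).eq_or_lt with h0 | h0
    · rw [← hd, ← h0]; positivity
    · have h4 : t * ‖d‖ * ‖d‖ ≤ t * ‖d‖ * (2 * (1 / 2) ^ k) := by
        have : 0 ≤ (1 / 2 : ℝ) ^ k * (t * ‖d‖) := by positivity
        nlinarith
      exact le_of_mul_le_mul_left h4 (by positivity)
  obtain ⟨A, hA⟩ := cauchySeq_tendsto_of_complete
    (cauchySeq_of_le_geometric (1 / 2) 2 (by norm_num) hdist)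
  have hAk := fun k => dist_le_of_le_geometric_of_tendsto (1 / 2) 2 (by norm_num) hdist hA k
  refine HasFDerivAt.differentiableAt (f' := innerSL ℝ A)
    (hasFDerivAt_iff_isLittleO_nhds_zero.2 (Asymptotics.isLittleO_iff.2 fun c hc => ?_))
  obtain ⟨k, hk⟩ := exists_pow_lt_of_lt_one (show 0 < c / 5 by positivity)
    (show (1 / 2 : ℝ) < 1 by norm_num)
  filter_upwards [ha k] with v hv
  rw [innerSL_apply_apply, Real.norm_eq_abs]
  have h1 : f (x + v) - f x - ⟪A, v⟫ = (f (x + v) - f x - ⟪a k, v⟫) + ⟪a k - A, v⟫ := by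
    rw [inner_sub_left]; ring
  rw [h1]
  refine (abs_add_le _ _).trans ?_
  have h2 := abs_real_inner_le_norm (a k - A) v
  have h3 : ‖a k - A‖ * ‖v‖ ≤ 4 * (1 / 2) ^ k * ‖v‖ := by
    refine mul_le_mul_of_nonneg_right ?_ (norm_nonneg _)
    rw [← dist_eq_norm]
    refine (hAk k).trans (le_of_eq ?_)
    ring
  have h4 : (1 / 2 : ℝ) ^ k * ‖v‖ ≤ c / 5 * ‖v‖ := mul_le_mul_of_nonneg_right hk.le (norm_nonneg _)
  linarith

lemma tendsto_gain : Tendsto gain atTop (𝓝 0) := by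
  have := (tendsto_pow_atTop_nhds_zero_of_lt_one (r := (1 / 1024 : ℝ)) (by norm_num)
    (by norm_num)).const_mul 2
  rwa [mul_zero] at this

lemma tendsto_sig_add_loss : Tendsto (fun n => sig n + loss (gain n)) atTop (𝓝 0) := by
  have h1 : Tendsto sig atTop (𝓝 0) := by
    have := (tendsto_pow_atTop_nhds_zero_of_lt_one (r := (1 / 4 : ℝ)) (by norm_num)
      (by norm_num)).const_mul 4
    rwa [mul_zero] at this
  have h3 : Continuous loss := by unfold loss; fun_prop
  simpa [loss_zero] using h1.add ((h3.tendsto 0).comp tendsto_gain)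

/-- Directions of small slope with respect to a direction well inside the cone are in the cone. -/
lemma dir_mem_cone {w e n : E2} (hw : ‖w‖ = 1) (hf : Frame e n) {η a : ℝ}
    (he : 1 - η / 2 ≤ ⟪e, w⟫) (ha : |a| ≤ η / 4) : dir e n a ∈ cone w η := by
  refine ⟨by simpa using hf.norm_dir a, ?_⟩
  have hs := sqrt_one_add_sq_pos a
  have h1 : √(1 + a ^ 2) ≤ 1 + |a| := by
    rw [Real.sqrt_le_left (by positivity)]
    nlinarith [sq_abs a, abs_nonneg a]
  have h1' : 1 ≤ √(1 + a ^ 2) := Real.one_le_sqrt.2 (by nlinarith)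
  have h2 : ‖dir e n a - e‖ ≤ 2 * |a| := by
    have h3 : dir e n a - e = (√(1 + a ^ 2))⁻¹ • ((1 - √(1 + a ^ 2)) • e + a • n) := by
      rw [dir, smul_add, smul_add, smul_smul, smul_smul, mul_sub, inv_mul_cancel₀ hs.ne']
      module
    rw [h3, norm_smul, norm_inv, Real.norm_eq_abs, abs_of_pos hs]
    have h4 : ‖(1 - √(1 + a ^ 2)) • e + a • n‖ ≤ 2 * |a| := by
      refine (norm_add_le _ _).trans ?_
      rw [norm_smul, norm_smul, hf.norm_e, hf.norm_n, Real.norm_eq_abs, Real.norm_eq_abs,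
        abs_of_nonpos (by linarith)]
      linarith
    have h5 : (√(1 + a ^ 2))⁻¹ ≤ 1 := inv_le_one_of_one_le₀ h1'
    calc _ ≤ 1 * ‖(1 - √(1 + a ^ 2)) • e + a • n‖ := by gcongr
      _ ≤ _ := by linarith
  have h3 := abs_le.1 (abs_real_inner_le_norm (dir e n a - e) w)
  rw [hw, inner_sub_left] at h3
  linarith

/-- The limit point of the stages is a point of differentiability: otherwise `key_step` would
produce candidates gaining more than the stages allow. -/
lemma differentiableAt_limit {f : E2 → ℝ} {D : Set (E2 × E2)} {U : ℕ → Set E2} {w : E2} {η : ℝ}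
    (hw : ‖w‖ = 1) (hη0 : 0 < η) (hη : η ≤ 1)
    (hf : ∀ y z, |f y - f z| ≤ η / 32 * ‖y - z‖) (hs : Slides D) (hC : D ⊆ univ ×ˢ cone w η)
    (hD : univ ×ˢ cone w η ⊆ closure D) {q : ℕ → Stage}
    (hg : ∀ n, Good f D U w η n (q n)) {x : E2}
    (hx : ∀ n, x ∈ ball (q n).x (q n).s ∧
      Slope (tilt f (q n).p) x (q n).e (q n).r ((q n).m - (sig n + loss (gain n)))) :
    DifferentiableAt ℝ f x := by
  have hC1 : ∀ v ∈ cone w η, ‖v‖ = 1 := fun v hv => by simpa using hv.1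
  refine differentiableAt_of_approx fun k => ?_
  set ε : ℝ := η * (1 / 2) ^ k with hε
  have hpow1 : (1 / 2 : ℝ) ^ k ≤ 1 := pow_le_one₀ (by norm_num) (by norm_num)
  have hpow0 : (0 : ℝ) < (1 / 2 : ℝ) ^ k := by positivity
  have hε0 : 0 < ε := by positivity
  have hεη : ε ≤ η := mul_le_of_le_one_right hη0.le hpow1
  have hεk : ε ≤ (1 / 2) ^ k := mul_le_of_le_one_left hpow0.le hη
  have hε1 : ε ≤ 1 := hεη.trans hη
  obtain ⟨n, hn1, hn2⟩ := ((tendsto_sig_add_loss.eventually_lt_const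
    (show (0 : ℝ) < ε ^ 4 / 2 ^ 20 by positivity)).and (tendsto_gain.eventually_lt_const
    (show (0 : ℝ) < ε ^ 4 / 2 ^ 22 by positivity))).exists
  obtain ⟨hxs, hsl⟩ := hx n
  have G := hg n
  obtain ⟨hDn, -, hdn, -, -⟩ := id G.self
  have hL := G.lip hη hf
  have he : ‖(q n).e‖ = 1 := hC1 _ (hC hDn).2
  have hm : |(q n).m| ≤ 1 := abs_deriv_le hL he hdn
  have hgap : 0 < (q n).s - ‖x - (q n).x‖ := by
    rw [mem_ball, dist_eq_norm] at hxs; linarith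
  have hew := G.dir_mem _ _ _ G.self
  have hκ0 : 0 < sig n + loss (gain n) := by
    have : 0 ≤ loss (gain n) := by unfold loss; have := gain_pos n; positivity
    linarith [sig_pos n]
  obtain ⟨ν, hν⟩ := exists_frame he
  refine ⟨(q n).m • (q n).e - (q n).p, ?_⟩
  have hev : ∀ c > 0, ∀ᶠ v in 𝓝 (0 : E2), 8192 * ‖v‖ / ε ^ 3 < c := fun c hc => by
    have : Tendsto (fun v : E2 => 8192 * ‖v‖ / ε ^ 3) (𝓝 0) (𝓝 (8192 * ‖(0 : E2)‖ / ε ^ 3)) :=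
      Continuous.tendsto (by fun_prop) _
    rw [norm_zero, mul_zero, zero_div] at this
    exact this.eventually_lt_const hc
  filter_upwards [hev _ (show 0 < ((q n).s - ‖x - (q n).x‖) / 30 by positivity),
    hev _ (show 0 < ε * (q n).r / 120 by have := G.r_pos; positivity)] with v hv1 hv2
  have hgood : ¬ ε * ‖v‖ <
      |tilt f (q n).p (x + v) - tilt f (q n).p x - (q n).m * ⟪v, (q n).e⟫| := by
    intro hbad
    have hfin : ∀ ν, Frame (q n).e ν → 0 ≤ ⟪v, ν⟫ → False := by
      intro ν hν hvν
      obtain ⟨x', e', m', h1, h2, h3, h4, h5⟩ := key_step hL hs hC hC1 hD hν hm hε0 hε1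
        (fun a ha => dir_mem_cone hw hν hew (ha.trans (by nlinarith))) hκ0.le hn1.le G.r_pos hsl
        hv1 hv2.le hvν hbad
      have hc : Cand f D (sig n) (q n) x' e' m' := by
        refine ⟨h1, ?_, h3, ?_, 0, sig_pos n, by simpa using h5⟩
        · have := norm_sub_le_norm_sub_add_norm_sub x' x (q n).x
          linarith
        · have : 0 < ε ^ 4 / 2 ^ 22 := by positivity
          linarith
      linarith [(G.bound _ _ _ hc).1]
    rcases le_total 0 ⟪v, ν⟫ with h | h
    · exact hfin ν hν h
    · exact hfin (-ν) hν.neg (by rw [inner_neg_right]; linarith)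
  rw [not_lt] at hgood
  refine le_trans (le_of_eq ?_) (hgood.trans (mul_le_mul_of_nonneg_right hεk (norm_nonneg v)))
  rw [tilt, tilt, inner_add_right, inner_sub_left, real_inner_smul_left,
    real_inner_comm (q n).e v]
  congr 1
  ring

/-! ### The initial stage and the conclusion -/

/-- The initial stage. The tilt by `w / 4` dominates `f`, so that candidates, which do not decrease
the derivative, cannot leave the cone. -/
lemma exists_base {f : E2 → ℝ} {D : Set (E2 × E2)} {U : ℕ → Set E2} {w : E2} {η : ℝ}
    (hw : ‖w‖ = 1) (hη0 : 0 < η) (hη : η ≤ 1)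
    (hf : ∀ y z, |f y - f z| ≤ η / 32 * ‖y - z‖) (hs : Slides D) (hC : D ⊆ univ ×ˢ cone w η)
    (hD : univ ×ˢ cone w η ⊆ closure D) (hU : ∀ n, IsOpen (U n)) (hDU : ∀ n, ∀ p ∈ D, p.1 ∈ U n) :
    ∃ q, Good f D U w η 0 q := by
  have hDn : ∀ z v, (z, v) ∈ D → ‖v‖ = 1 := fun z v h => by simpa using (hC h).2.1
  have hww : ⟪w, w⟫ = 1 := by rw [real_inner_self_eq_norm_sq, hw]; norm_num
  have h0 : ((0 : E2), w) ∈ closure D :=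
    hD ⟨mem_univ _, by simpa using hw, by rw [hww]; linarith⟩
  obtain ⟨⟨z, e⟩, hzD, hze⟩ := Metric.mem_closure_iff.1 h0 (η / 4) (by positivity)
  have he : ‖e‖ = 1 := hDn z e hzD
  have hew : 1 - η / 4 ≤ ⟪e, w⟫ := by
    have h1 : ‖e - w‖ < η / 4 := by
      rw [← dist_eq_norm, dist_comm]
      exact (le_max_right _ _).trans_lt hze
    have h2 := abs_le.1 (abs_real_inner_le_norm (e - w) w)
    rw [hw, inner_sub_left, hww] at h2
    linarith
  have hlip : ∀ y v, ‖v‖ = 1 → ∀ a b : ℝ, |f (y + a • v) - f (y + b • v)| ≤ η / 32 * |a - b| := by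
    intro y v hv a b
    have := hf (y + a • v) (y + b • v)
    rwa [show y + a • v - (y + b • v) = (a - b) • v by module, norm_smul, hv, mul_one,
      Real.norm_eq_abs] at this
  obtain ⟨a, ha⟩ : ∃ a : ℝ, DifferentiableAt ℝ (fun t : ℝ => f (z + t • e)) a := by
    have : LipschitzWith 1 (fun t : ℝ => f (z + t • e)) := by
      refine LipschitzWith.of_dist_le_mul fun a b => ?_
      rw [Real.dist_eq, Real.dist_eq, NNReal.coe_one]
      refine (hlip z e he a b).trans (mul_le_mul_of_nonneg_right (by linarith) (abs_nonneg _))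
    exact (this.ae_differentiableAt (μ := volume)).exists
  have hd : HasDerivAt (fun t : ℝ => tilt f 0 (z + a • e + t • e))
      (deriv (fun t : ℝ => f (z + t • e)) a) 0 := by
    have h1 := HasDerivAt.comp_const_add a 0
      (f := fun t : ℝ => f (z + t • e)) (by rw [add_zero]; exact ha.hasDerivAt)
    refine h1.congr_of_eventuallyEq (Eventually.of_forall fun t => ?_)
    simp only [tilt, inner_zero_left, add_zero]
    rw [add_smul, add_assoc]
  have hd' := hasDerivAt_tilt_add (q := (1 / 4 : ℝ) • w) hd
  rw [zero_add] at hd'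
  set y := z + a • e with hy
  set g := deriv (fun t : ℝ => f (z + t • e)) a
  have hbase : ∀ y v m, ‖v‖ = 1 → HasDerivAt (fun t : ℝ => tilt f 0 (y + t • v)) m 0 →
      |m| ≤ η / 32 := by
    intro y v m hv hm
    refine hm.le_of_lip' (by positivity) (Eventually.of_forall fun t => ?_)
    simp only [tilt, inner_zero_left, add_zero]
    exact hlip y v hv t 0
  have hyD : (y, e) ∈ D := hs z e a hzD
  obtain ⟨s, hs0, hsU⟩ := Metric.isOpen_iff.1 (hU 0) y (hDU 0 (y, e) hyD)
  have hnp : ‖(1 / 4 : ℝ) • w‖ = 1 / 4 := by rw [norm_smul, hw]; norm_num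
  have hL : LipschitzWith 1 (tilt f ((1 / 4 : ℝ) • w)) := tilt_lip hη hf (by rw [hnp]; norm_num)
  have hm := abs_le.1 (abs_deriv_le hL he hd')
  refine ⟨⟨(1 / 4 : ℝ) • w, y, e, g + ⟪(1 / 4 : ℝ) • w, e⟫, 1, s⟩,
    ⟨hyD, by simpa using hs0, hd', le_rfl, 2, by norm_num [sig], ?_⟩, one_pos, hs0,
    fun x' e' m' h => ?_, by rw [hnp]; norm_num, hsU, fun x' e' m' h => ?_⟩
  · simp only [sub_self, loss_zero, sub_zero]
    intro t ht _
    have h1 := abs_le.1 (lip_sub hL (y + t • e) y)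
    have h2 := abs_le.1 (lip_sub hL y (y - t • e))
    rw [add_sub_cancel_left, norm_smul, he, Real.norm_eq_abs, abs_of_pos ht] at h1
    rw [sub_sub_cancel, norm_smul, he, Real.norm_eq_abs, abs_of_pos ht] at h2
    have h3 : (g + ⟪(1 / 4 : ℝ) • w, e⟫ - 2) * t ≤ (-1) * t :=
      mul_le_mul_of_nonneg_right (by linarith) ht.le
    constructor <;> linarith
  · have he' := hDn x' e' h.1
    have h1 := abs_le.1 (abs_deriv_le hL he' h.2.2.1)
    have h2 := norm_sub_le e' e
    rw [he, he'] at h2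
    simp only
    norm_num [gain, sig]
    constructor <;> linarith
  · have he' := hDn x' e' h.1
    have h1 := hasDerivAt_tilt_add (q := -((1 / 4 : ℝ) • w)) h.2.2.1
    simp only [add_neg_cancel] at h1
    have h2 := abs_le.1 (hbase _ _ _ he' h1)
    have h3 := abs_le.1 (hbase _ _ _ he hd)
    have h4 := h.2.2.2.1
    simp only at h4
    rw [inner_neg_left, real_inner_smul_left, real_inner_comm] at h2
    rw [real_inner_smul_left, real_inner_comm] at h4
    linarith

/-- Functions with a small Lipschitz constant have points of differentiability in `⋂ n, U n`. -/
lemma exists_differentiableAt {f : E2 → ℝ} {D : Set (E2 × E2)} {U : ℕ → Set E2} {w : E2} {η : ℝ}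
    (hw : ‖w‖ = 1) (hη0 : 0 < η) (hη : η ≤ 1)
    (hf : ∀ y z, |f y - f z| ≤ η / 32 * ‖y - z‖) (hs : Slides D) (hC : D ⊆ univ ×ˢ cone w η)
    (hD : univ ×ˢ cone w η ⊆ closure D) (hU : ∀ n, IsOpen (U n)) (hDU : ∀ n, ∀ p ∈ D, p.1 ∈ U n) :
    ∃ x ∈ ⋂ n, U n, DifferentiableAt ℝ f x := by
  obtain ⟨q₀, hq₀⟩ := exists_base hw hη0 hη hf hs hC hD hU hDU
  obtain ⟨q, hg, hq⟩ := exists_stages hq₀ hη hf (fun p hp => by simpa using (hC hp).2.1) hU hDU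
  obtain ⟨x, hx⟩ := exists_limit hη hf hg hq
  exact ⟨x, mem_iInter.2 fun n => (hg n).sub (hx n).1,
    differentiableAt_limit hw hη0 hη hf hs hC hD hg hx⟩

/-- If the lines `L_k = x_k + ℝ e_k` with `e_k ∈ C(w,η)` are such that
`((x_k, e_k))_k` is dense in `ℝ² × C(w,η)`, and `ρ_k > 0`, then
`E = ⋂_n ⋃_{k ≥ n} B(L_k, ρ_k)` is a universal differentiability set; moreover `E`
contains a sequence of lines `x̃_k + ℝ ẽ_k`, `ẽ_k ∈ C(w,η)`, with `((x̃_k, ẽ_k))_k`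
dense in `ℝ² × C(w,η)`. -/
theorem stmt5 (w : E2) (hw : w ∈ sphere (0:E2) 1) (η : ℝ) (hη : η ∈ Set.Ioc (0:ℝ) 1)
    (x e : ℕ → E2) (he : ∀ k, e k ∈ cone w η) (ρ : ℕ → ℝ) (hρ : ∀ k, 0 < ρ k)
    (hdense : Set.univ ×ˢ cone w η ⊆ closure (Set.range fun k => (x k, e k)))
    (E : Set E2)
    (hE : E = ⋂ n : ℕ, ⋃ k, ⋃ _ : n ≤ k, Metric.thickening (ρ k) (line (x k) (e k))) :
    IsUDS E ∧
      ∃ x' e' : ℕ → E2, (∀ k, e' k ∈ cone w η) ∧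
        (∀ k, line (x' k) (e' k) ⊆ E) ∧
        Set.univ ×ˢ cone w η ⊆ closure (Set.range fun k => (x' k, e' k)) := by
  have hw1 : ‖w‖ = 1 := by simpa using hw
  have hd := dense_lines he hρ hdense hE
  have hne : (cone w η).Nonempty := ⟨e 0, he 0⟩
  refine ⟨?_, second_part hne hd⟩
  rintro f ⟨K, hK⟩
  let D : Set (E2 × E2) := {p | p.2 ∈ cone w η ∧ line p.1 p.2 ⊆ E}
  let U : ℕ → Set E2 := fun n => ⋃ k, ⋃ _ : n ≤ k, Metric.thickening (ρ k) (line (x k) (e k))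
  have hEU : E = ⋂ n, U n := hE
  have hs : Slides D := by
    rintro z v t ⟨hv, hl⟩
    refine ⟨hv, fun y hy => hl ?_⟩
    obtain ⟨a, rfl⟩ := hy
    exact ⟨t + a, by simp only; module⟩
  have hC : D ⊆ univ ×ˢ cone w η := fun p hp => ⟨mem_univ _, hp.1⟩
  have hD : univ ×ˢ cone w η ⊆ closure D := by
    rintro ⟨z, v⟩ ⟨-, hv⟩
    exact map_mem_closure (f := fun p : E2 × cone w η => (p.1, (p.2 : E2))) (by fun_prop)
      (hd (z, ⟨v, hv⟩)) fun p hp => ⟨p.2.2, hp⟩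
  have hU : ∀ n, IsOpen (U n) := fun n =>
    isOpen_iUnion fun k => isOpen_iUnion fun _ => isOpen_thickening
  have hDU : ∀ n, ∀ p ∈ D, p.1 ∈ U n := by
    intro n p hp
    have h1 : p.1 ∈ E := hp.2 ⟨0, by simp⟩
    rw [hEU] at h1
    exact mem_iInter.1 h1 n
  obtain ⟨c, hc⟩ : ∃ c : ℝ, c = η / 32 / (K + 1) := ⟨_, rfl⟩
  have hη0 := hη.1
  have hK0 : (0 : ℝ) ≤ K := K.2
  have hc0 : 0 < c := by rw [hc]; positivity
  have hcK : c * K ≤ η / 32 := by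
    rw [hc, div_mul_eq_mul_div, div_le_iff₀ (by positivity)]
    nlinarith
  obtain ⟨y, hy, hdiff⟩ := exists_differentiableAt (f := fun y => c * f y) hw1 hη0 hη.2
    (fun y z => by
      have h1 := hK.dist_le_mul y z
      rw [Real.dist_eq, dist_eq_norm] at h1
      rw [← mul_sub, abs_mul, abs_of_pos hc0]
      calc c * |f y - f z| ≤ c * (K * ‖y - z‖) := by gcongr
        _ = c * K * ‖y - z‖ := by ring
        _ ≤ _ := by gcongr) hs hC hD hU hDU
  refine ⟨y, by rw [hEU]; exact hy, ?_⟩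
  have h2 := hdiff.const_mul c⁻¹
  simpa only [inv_mul_cancel_left₀ hc0.ne'] using h2

end
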